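/- arXiv:1603.02330 — 2 statements merged into one kernel-verified Lean document; each statement's English description precedes it below -/
import Mathlib

section
/- Let m, n be positive integers and E ⊂ ℝⁿ a finite set. Let (P^x)_{x∈E} be a family of polynomials of degree at most m−1 and let M > 0. Suppose that P^x ∈ Γ'*(x, M) for all x ∈ E, and that |∂^β(P^x − P^y)(x)| ≤ M|x − y|^{m−|β|} for all x, y ∈ E and |β| ≤ m−1. Then there exist a constant C depending only on m, n and a function F ∈ C^{m-1,1}(ℝⁿ) such that J_x(F) = P^x for all x ∈ E and ‖F‖_{C^{m-1,1}(ℝⁿ)} ≤ CM; moreover F can be taken nonnegative on ℝⁿ. -/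
open scoped BigOperators

noncomputable section

abbrev Euc (n : ℕ) : Type := EuclideanSpace ℝ (Fin n)
abbrev MPoly (n : ℕ) : Type := MvPolynomial (Fin n) ℝ

/-- Partial derivative in the `i`-th coordinate direction. -/
noncomputable def pD {n : ℕ} (i : Fin n) (F : Euc n → ℝ) : Euc n → ℝ :=
  fun x => fderiv ℝ F x (EuclideanSpace.single i (1 : ℝ))

/-- The multi-index partial derivative `∂^α F`. -/
noncomputable def mD {n : ℕ} (α : Fin n → ℕ) (F : Euc n → ℝ) : Euc n → ℝ :=
  (((List.finRange n).flatMap fun i => List.replicate (α i) i)).foldr pD F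

/-- Partial derivative within a set. -/
noncomputable def pDW {n : ℕ} (s : Set (Euc n)) (i : Fin n) (F : Euc n → ℝ) : Euc n → ℝ :=
  fun x => fderivWithin ℝ F s x (EuclideanSpace.single i (1 : ℝ))

/-- Multi-index partial derivative within a set. -/
noncomputable def mDW {n : ℕ} (s : Set (Euc n)) (α : Fin n → ℕ) (F : Euc n → ℝ) : Euc n → ℝ :=
  (((List.finRange n).flatMap fun i => List.replicate (α i) i)).foldr (pDW s) F

/-- The order `|α|` of a multi-index. -/
def deg {n : ℕ} (α : Fin n → ℕ) : ℕ := ∑ i, α i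

/-- Evaluation of an `n`-variable polynomial at a point of `ℝⁿ`. -/
noncomputable def peval {n : ℕ} (P : MPoly n) (x : Euc n) : ℝ :=
  MvPolynomial.eval (fun i => x i) P

/-- `F ∈ C^m(ℝⁿ)` with `‖F‖_{C^m(ℝⁿ)} ≤ M`. -/
def CmNormLe (m n : ℕ) (F : Euc n → ℝ) (M : ℝ) : Prop :=
  ContDiff ℝ (m : ℕ∞) F ∧ ∀ α : Fin n → ℕ, deg α ≤ m → ∀ x : Euc n, |mD α F x| ≤ M

/-- `F ∈ C^{m-1,1}(ℝⁿ)` with `‖F‖_{C^{m-1,1}(ℝⁿ)} ≤ M`. -/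
def CmLipNormLe (m n : ℕ) (F : Euc n → ℝ) (M : ℝ) : Prop :=
  ContDiff ℝ ((m - 1 : ℕ) : ℕ∞) F ∧
  (∀ α : Fin n → ℕ, deg α ≤ m - 1 → ∀ x : Euc n, |mD α F x| ≤ M) ∧
  (∀ α : Fin n → ℕ, deg α = m - 1 → ∀ i : Fin n, ∀ x : Euc n, ∀ t : ℝ,
    |mD α F (x + t • EuclideanSpace.single i (1 : ℝ)) - mD α F x| ≤ M * |t|)

/-- `J_x(F) = P`, i.e. `P` is the `(m-1)`-st order Taylor polynomial of `F` at `x`. -/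
def IsJetAt (m n : ℕ) (F : Euc n → ℝ) (x : Euc n) (P : MPoly n) : Prop :=
  P.totalDegree ≤ m - 1 ∧
  ∀ α : Fin n → ℕ, deg α ≤ m - 1 → mD α (peval P) x = mD α F x

/-- `J_x^+(F) = P`, i.e. `P` is the `m`-th order Taylor polynomial of `F` at `x`. -/
def IsJetPlusAt (m n : ℕ) (F : Euc n → ℝ) (x : Euc n) (P : MPoly n) : Prop :=
  P.totalDegree ≤ m ∧
  ∀ α : Fin n → ℕ, deg α ≤ m → mD α (peval P) x = mD α F x

/-- Truncation of a polynomial: keep the monomials of total degree `≤ d`. -/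
noncomputable def truncLE {n : ℕ} (d : ℕ) (P : MPoly n) : MPoly n :=
  ∑ s ∈ P.support.filter (fun s => (s.sum fun _ e => e) ≤ d),
    MvPolynomial.monomial s (P.coeff s)

/-- Substitution `y ↦ y + v` in a polynomial. -/
noncomputable def polyShift {n : ℕ} (v : Fin n → ℝ) (P : MPoly n) : MPoly n :=
  MvPolynomial.aeval (fun i => (MvPolynomial.X i + MvPolynomial.C (v i) : MPoly n)) P

/-- The `(m-1)`-st order Taylor polynomial of a polynomial `P` at `x`. -/
noncomputable def jetTrunc (m n : ℕ) (x : Euc n) (P : MPoly n) : MPoly n :=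
  polyShift (fun i => -(x i)) (truncLE (m - 1) (polyShift (fun i => x i) P))

/-- Multiplication of `(m-1)`-jets at `x`: `P ⊙_x Q = J_x(PQ)`. -/
noncomputable def jmul (m n : ℕ) (x : Euc n) (P Q : MPoly n) : MPoly n :=
  jetTrunc m n x (P * Q)

/-- `Γ*(x,M)`. -/
def GammaStar (m n : ℕ) (x : Euc n) (M : ℝ) : Set (MPoly n) :=
  {P | ∃ F : Euc n → ℝ, CmNormLe m n F M ∧ (∀ y, 0 ≤ F y) ∧ IsJetAt m n F x P}

/-- `Γ_f(x,M)`. -/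
def GammaF (m n : ℕ) (f : Euc n → ℝ) (x : Euc n) (M : ℝ) : Set (MPoly n) :=
  {P ∈ GammaStar m n x M | peval P x = f x}

/-- `Γ'*(x,M)` (the `C^{m-1,1}` version). -/
def GammaStar' (m n : ℕ) (x : Euc n) (M : ℝ) : Set (MPoly n) :=
  {P | ∃ F : Euc n → ℝ, CmLipNormLe m n F M ∧ (∀ y, 0 ≤ F y) ∧ IsJetAt m n F x P}

/-- `Γ'_f(x,M)`. -/
def GammaF' (m n : ℕ) (f : Euc n → ℝ) (x : Euc n) (M : ℝ) : Set (MPoly n) :=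
  {P ∈ GammaStar' m n x M | peval P x = f x}

/-- `Γ₀⁺`. -/
def Gamma0plus (m n : ℕ) : Set (MPoly n) :=
  {P | P.totalDegree ≤ m ∧
    (∀ β : Fin n → ℕ, deg β ≤ m → |mD β (peval P) 0| ≤ 1) ∧
    (∀ x : Euc n, 0 ≤ peval P x + ‖x‖ ^ m) ∧
    (∀ ε : ℝ, 0 < ε → ∃ δ : ℝ, 0 < δ ∧ ∀ x : Euc n, ‖x‖ ≤ δ → 0 ≤ peval P x + ε * ‖x‖ ^ m)}

/-- `Γ̃₀'`. -/
def GammaTilde0' (m n : ℕ) : Set (MPoly n) :=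
  {P | P.totalDegree ≤ m - 1 ∧
    (∀ β : Fin n → ℕ, deg β ≤ m - 1 → |mD β (peval P) 0| ≤ 1) ∧
    ∀ x : Euc n, 0 ≤ peval P x + ‖x‖ ^ m}

/-- The closed axis-parallel cube with center `c` and sidelength `δ`. -/
def cube {n : ℕ} (c : Euc n) (δ : ℝ) : Set (Euc n) :=
  {y | ∀ i, |y i - c i| ≤ δ / 2}

/-- `F ∈ C^{m-1,1}(Q)` with `‖F‖_{C^{m-1,1}(Q)} ≤ M`, for the cube `Q` of center `c`,
sidelength `δ`. -/
def CmLipOnCubeLe (m n : ℕ) (c : Euc n) (δ : ℝ) (F : Euc n → ℝ) (M : ℝ) : Prop :=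
  ContDiffOn ℝ ((m - 1 : ℕ) : ℕ∞) F (cube c δ) ∧
  (∀ α : Fin n → ℕ, deg α ≤ m - 1 → ∀ x ∈ cube c δ, |mDW (cube c δ) α F x| ≤ M) ∧
  (∀ α : Fin n → ℕ, deg α = m - 1 → ∀ i : Fin n, ∀ x ∈ cube c δ, ∀ t : ℝ,
    x + t • EuclideanSpace.single i (1 : ℝ) ∈ cube c δ →
    |mDW (cube c δ) α F (x + t • EuclideanSpace.single i (1 : ℝ)) - mDW (cube c δ) α F x|
      ≤ M * |t|)

section

lemma contDiff_foldr_pD {n : ℕ} (L : List (Fin n)) (k : ℕ) (f : Euc n → ℝ)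
    (hf : ContDiff ℝ ((L.length + k : ℕ) : ℕ∞) f) : ContDiff ℝ (k : ℕ∞) (L.foldr pD f) := by
  induction L generalizing k with
  | nil => simpa using hf
  | cons i T ih =>
    have h := ih (k+1) (by
      have : (i :: T).length + k = T.length + (k+1) := by simp; omega
      rwa [this] at hf)
    simp only [List.foldr_cons]
    unfold pD
    have h2 : ContDiff ℝ (k : ℕ∞) (fderiv ℝ (T.foldr pD f)) := by
      apply ContDiff.fderiv_right h
      norm_cast
    exact h2.clm_apply contDiff_const

lemma foldr_pD_eq {n : ℕ} (L : List (Fin n)) (f : Euc n → ℝ)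
    (hf : ContDiff ℝ (L.length : ℕ∞) f) (z : Euc n) :
    L.foldr pD f z = iteratedFDeriv ℝ L.length f z
      (fun j => EuclideanSpace.single (L.get j) (1:ℝ)) := by
  induction L generalizing z with
  | nil => simp
  | cons i T ih =>
    have hT : ContDiff ℝ (T.length : ℕ∞) f := hf.of_le (by simp)
    have e : T.foldr pD f = fun y => iteratedFDeriv ℝ T.length f y
      (fun j => EuclideanSpace.single (T.get j) (1:ℝ)) := by
      funext y; exact ih hT y
    simp only [List.foldr_cons]
    rw [e]
    unfold pD
    have hd : DifferentiableAt ℝ (iteratedFDeriv ℝ T.length f) z := by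
      apply (hf.differentiable_iteratedFDeriv (m := T.length) ?_) z
      simp; norm_cast; omega
    have := (hd.hasFDerivAt.continuousMultilinear_apply_const 
      (fun j => EuclideanSpace.single (T.get j) (1:ℝ)))
    rw [this.fderiv]
    simp only [List.length_cons]
    rw [iteratedFDeriv_succ_apply_left]
    rfl

lemma foldr_pD_perm {n : ℕ} {L L' : List (Fin n)} (h : L.Perm L') (f : Euc n → ℝ)
    (hf : ContDiff ℝ (L.length : ℕ∞) f) : L.foldr pD f = L'.foldr pD f := by
  induction h with
  | nil => rfl
  | cons x _ ih => simp only [List.foldr_cons]; rw [ih (hf.of_le (by simp))]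
  | swap x y l =>
    simp only [List.foldr_cons]
    have h2 : ContDiff ℝ (2 : ℕ∞) (l.foldr pD f) := contDiff_foldr_pD l 2 f hf
    funext z
    have hs : IsSymmSndFDerivAt ℝ (l.foldr pD f) z :=
      (h2.contDiffAt).isSymmSndFDerivAt (by simp)
    have hd : DifferentiableAt ℝ (fderiv ℝ (l.foldr pD f)) z := by
      have : ContDiff ℝ (1:ℕ∞) (fderiv ℝ (l.foldr pD f)) := h2.fderiv_right (by norm_num)
      exact (this.differentiable (by simp)) z
    have key : ∀ a b : Fin n, pD a (pD b (l.foldr pD f)) z =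
        fderiv ℝ (fderiv ℝ (l.foldr pD f)) z (EuclideanSpace.single a 1) (EuclideanSpace.single b 1) := by
      intro a b
      generalize List.foldr pD f l = g at hd
      unfold pD
      rw [fderiv_clm_apply hd (by fun_prop)]
      simp
    rw [key, key]
    exact hs _ _
  | trans h1 _ ih1 ih2 =>
    rw [ih1 hf, ih2 (by rw [← h1.length_eq]; exact hf)]

def mList {n : ℕ} (α : Fin n → ℕ) : List (Fin n) :=
  (List.finRange n).flatMap fun i => List.replicate (α i) i

lemma mD_eq_foldr {n : ℕ} (α : Fin n → ℕ) (f : Euc n → ℝ) : mD α f = (mList α).foldr pD f := rfl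

lemma mList_length {n : ℕ} (α : Fin n → ℕ) : (mList α).length = deg α := by
  unfold mList deg
  rw [List.length_flatMap]
  simp [← List.ofFn_eq_map, List.sum_ofFn]

lemma mList_count {n : ℕ} (α : Fin n → ℕ) (i : Fin n) : (mList α).count i = α i := by
  unfold mList
  rw [List.count_flatMap]
  have : (List.count i ∘ fun i => List.replicate (α i) i) = fun j => if j = i then α j else 0 := by
    funext j; simp [List.count_replicate]
  rw [this, ← List.ofFn_eq_map, List.sum_ofFn]
  simp

lemma mD_apply {n : ℕ} (α : Fin n → ℕ) (f : Euc n → ℝ) (hf : ContDiff ℝ (deg α : ℕ∞) f) (z : Euc n) :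
    mD α f z = iteratedFDeriv ℝ (mList α).length f z
      (fun j => EuclideanSpace.single ((mList α).get j) (1:ℝ)) := by
  rw [mD_eq_foldr]; exact foldr_pD_eq _ _ (by rwa [mList_length]) z

lemma abs_mD_le {n : ℕ} (α : Fin n → ℕ) (f : Euc n → ℝ) (hf : ContDiff ℝ (deg α : ℕ∞) f) (z : Euc n) :
    |mD α f z| ≤ ‖iteratedFDeriv ℝ (deg α) f z‖ := by
  rw [mD_apply α f hf, ← Real.norm_eq_abs]
  refine (ContinuousMultilinearMap.le_opNorm _ _).trans ?_
  have : ∀ k, k = deg α → ‖iteratedFDeriv ℝ k f z‖ ≤ ‖iteratedFDeriv ℝ (deg α) f z‖ := by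
    rintro k rfl; rfl
  simpa using this _ (mList_length α)

lemma norm_le_mD {n : ℕ} (k : ℕ) (f : Euc n → ℝ) (hf : ContDiff ℝ (k : ℕ∞) f) (z : Euc n) (A : ℝ)
    (hA0 : 0 ≤ A)
    (hA : ∀ α : Fin n → ℕ, deg α = k → |mD α f z| ≤ A) :
    ‖iteratedFDeriv ℝ k f z‖ ≤ (n:ℝ)^k * A := by
  have hr : ∀ r : Fin k → Fin n,
      |iteratedFDeriv ℝ k f z (fun j => EuclideanSpace.single (r j) (1:ℝ))| ≤ A := by
    intro r
    set L := List.ofFn r with hL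
    have hlen : L.length = k := by simp [hL]
    let α : Fin n → ℕ := fun i => L.count i
    have hp : L.Perm (mList α) := by
      rw [List.perm_iff_count]; intro a; rw [mList_count]
    have hdeg : deg α = k := by rw [← mList_length, ← hp.length_eq, hlen]
    have h1 := hA α hdeg
    rw [mD_eq_foldr, ← foldr_pD_perm hp f (by rwa [hlen]), foldr_pD_eq _ _ (by rwa [hlen])] at h1
    convert h1 using 2
    clear h1 hp
    have : ∀ (k' : ℕ) (hk : k' = k) (w : Fin k' → Euc n) (w' : Fin k → Euc n)
      (_ : ∀ j, w (Fin.cast hk.symm j) = w' j), iteratedFDeriv ℝ k f z w' = iteratedFDeriv ℝ k' f z w := by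
      intro k' hk w w' h; subst hk; congr 1; funext j; exact (h j).symm
    apply this _ hlen
    intro j; simp [hL]
  refine ContinuousMultilinearMap.opNorm_le_bound (by positivity) ?_
  intro v
  have hv : v = fun j => ∑ i : Fin n, (v j i) • EuclideanSpace.single i (1:ℝ) := by
    funext j
    ext l
    simp [Pi.single_apply]
  conv_lhs => rw [hv]
  rw [ContinuousMultilinearMap.map_sum]
  refine (norm_sum_le _ _).trans ?_
  have : ∀ r ∈ (Finset.univ : Finset (Fin k → Fin n)),
      ‖iteratedFDeriv ℝ k f z fun i => v i (r i) • EuclideanSpace.single (r i) (1:ℝ)‖ ≤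
       A * ∏ i, ‖v i‖ := by
    intro r _
    rw [ContinuousMultilinearMap.map_smul_univ, norm_smul, mul_comm]
    refine mul_le_mul (hr r) ?_ (norm_nonneg _) hA0
    rw [norm_prod]
    refine Finset.prod_le_prod (fun _ _ => norm_nonneg _) (fun i _ => PiLp.norm_apply_le _ _)
  refine (Finset.sum_le_sum this).trans ?_
  simp [mul_assoc]

end

section

lemma lip_off_countable (f : ℝ → ℝ) (s : Set ℝ) (hs : s.Countable) (hc : Continuous f) (L : ℝ)
    (hL : 0 ≤ L)
    (hd : ∀ t, t ∉ s → DifferentiableAt ℝ f t ∧ |deriv f t| ≤ L) (a b : ℝ) :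
    |f b - f a| ≤ L * |b - a| := by
  classical
  let g : ℝ → ℝ := fun t => if t ∈ s then 0 else deriv f t
  have hg : ∀ t, ‖g t‖ ≤ L := by
    intro t; simp only [g]
    split_ifs with h
    · simpa using hL
    · exact (hd t h).2
  have hgm : Measurable g := Measurable.ite hs.measurableSet measurable_const (measurable_deriv f)
  have h := MeasureTheory.integral_eq_of_hasDerivAt_off_countable f g (a := a) (b := b) hs
    hc.continuousOn (by
      intro x hx
      have := (hd x hx.2).1.hasDerivAt
      simpa [g, hx.2] using this)
    ((intervalIntegrable_const (c := L)).mono_fun' hgm.aestronglyMeasurable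
      (Filter.Eventually.of_forall hg))
  rw [← h, ← Real.norm_eq_abs]
  exact intervalIntegral.norm_integral_le_of_norm_le_const (fun t _ => hg t)

variable {V W : Type} [NormedAddCommGroup V] [NormedSpace ℝ V] [NormedAddCommGroup W] [NormedSpace ℝ W]

lemma taylor_bd (k : ℕ) (g : V → W) (hg : ContDiff ℝ (k : ℕ∞) g) (x : V) (r c Λ : ℝ) (hr : 0 < r)
    (hc : 0 ≤ c) (hΛ : 0 ≤ Λ)
    (h1 : ∀ i < k, ‖iteratedFDeriv ℝ i g x‖ * r ^ i ≤ Λ)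
    (h2 : ∀ y ∈ Metric.closedBall x (c * r), ‖iteratedFDeriv ℝ k g y‖ * r ^ k ≤ Λ) :
    ∀ i ≤ k, ∀ y ∈ Metric.closedBall x (c * r), ‖iteratedFDeriv ℝ i g y‖ * r ^ i ≤ (1 + c) ^ k * Λ := by
  have main : ∀ j i, i + j = k → ∀ y ∈ Metric.closedBall x (c * r),
      ‖iteratedFDeriv ℝ i g y‖ * r ^ i ≤ (1 + c) ^ j * Λ := by
    intro j
    induction j with
    | zero => intro i hi y hy; simp at hi; subst hi; simpa using h2 y hy
    | succ j ih =>
      intro i hi y hy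
      have ih' := ih (i+1) (by omega)
      have hB : ∀ w ∈ Metric.closedBall x (c * r), ‖fderiv ℝ (iteratedFDeriv ℝ i g) w‖ ≤
          (1 + c) ^ j * Λ / r ^ (i+1) := by
        intro w hw
        rw [norm_fderiv_iteratedFDeriv, le_div_iff₀ (by positivity)]
        exact ih' w hw
      have hd : ∀ w ∈ Metric.closedBall x (c * r), DifferentiableAt ℝ (iteratedFDeriv ℝ i g) w := by
        intro w _
        refine (hg.differentiable_iteratedFDeriv (m := i) ?_) w
        norm_cast; omega
      have hmv := (convex_closedBall x (c * r)).norm_image_sub_le_of_norm_fderiv_le hd hB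
        (Metric.mem_closedBall_self (by positivity)) hy
      have h3 : ‖y - x‖ ≤ c * r := by simpa [dist_eq_norm] using hy
      have h4 : ‖iteratedFDeriv ℝ i g y‖ ≤ ‖iteratedFDeriv ℝ i g x‖ +
          (1 + c) ^ j * Λ / r ^ (i+1) * (c * r) := by
        have := norm_le_norm_add_norm_sub' (iteratedFDeriv ℝ i g y) (iteratedFDeriv ℝ i g x)
        have h5 : (1 + c) ^ j * Λ / r ^ (i+1) * ‖y - x‖ ≤ (1 + c) ^ j * Λ / r ^ (i+1) * (c * r) := by
          gcongr
        linarith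
      calc ‖iteratedFDeriv ℝ i g y‖ * r ^ i ≤ (‖iteratedFDeriv ℝ i g x‖ +
          (1 + c) ^ j * Λ / r ^ (i+1) * (c * r)) * r ^ i := by gcongr
        _ = ‖iteratedFDeriv ℝ i g x‖ * r ^ i + (1 + c) ^ j * Λ * c := by
            field_simp; ring
        _ ≤ Λ + (1 + c) ^ j * Λ * c := by
            gcongr; exact h1 i (by omega)
        _ ≤ (1 + c) ^ j * Λ + (1 + c) ^ j * Λ * c := by
            gcongr
            exact le_mul_of_one_le_left hΛ (one_le_pow₀ (by linarith))
        _ = (1 + c) ^ (j+1) * Λ := by ring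
  intro i hi y hy
  refine (main (k - i) i (by omega) y hy).trans ?_
  gcongr
  · linarith
  · omega

open Topology in
lemma removal (s : ℕ) : ∀ (W : Type) [NormedAddCommGroup W] [NormedSpace ℝ W] (f : V → W) (x : V)
    (Λ : ℝ) (_ : f x = 0)
    (_ : ∀ᶠ z in 𝓝 x, z ≠ x → ContDiffAt ℝ ((s:ℕ) : ℕ∞) f z)
    (_ : ∀ᶠ z in 𝓝 x, z ≠ x → ∀ i ≤ s, ‖iteratedFDeriv ℝ i f z‖ ≤ Λ * ‖z - x‖ ^ (s + 1 - i)),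
    ContDiffAt ℝ ((s:ℕ) : ℕ∞) f x ∧ ∀ i ≤ s, iteratedFDeriv ℝ i f x = 0 := by
  induction s with
  | zero =>
    intro W _ _ f x Λ h0 hs hb
    have hcx : ContinuousAt f x := by
      rw [ContinuousAt, h0]
      refine squeeze_zero_norm' (a := fun z => Λ * ‖z - x‖) ?_ ?_
      · filter_upwards [hb] with z hz
        by_cases hzx : z = x
        · simp [hzx, h0]
        · simpa using hz hzx 0 le_rfl
      · have : Continuous (fun z => Λ * ‖z - x‖) := by fun_prop
        have h := this.tendsto x
        simpa using h
    refine ⟨?_, ?_⟩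
    · have := (contDiffAt_zero (𝕜 := ℝ) (f := f) (x := x)).2 ⟨_, hs, ?_⟩
      · simpa using this
      · intro z hz
        by_cases hzx : z = x
        · subst hzx; exact hcx.continuousWithinAt
        · exact (hz hzx).continuousAt.continuousWithinAt
    · intro i hi
      obtain rfl : i = 0 := by omega
      ext v; simp [h0]
  | succ s ih =>
    intro W _ _ f x Λ h0 hs hb
    have hdx : HasFDerivAt f (0 : V →L[ℝ] W) x := by
      rw [hasFDerivAt_iff_isLittleO_nhds_zero, Asymptotics.isLittleO_iff]
      intro c hc
      have h1 : ∀ᶠ z in 𝓝 x, ‖f z‖ ≤ |Λ| * ‖z - x‖ ^ (s + 2) := by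
        filter_upwards [hb] with z hz
        by_cases hzx : z = x
        · simp [hzx, h0]
        · have := hz hzx 0 (by omega)
          simp only [norm_iteratedFDeriv_zero] at this
          refine this.trans ?_
          have e : s + 1 + 1 - 0 = s + 2 := by omega
          rw [e]
          gcongr
          exact le_abs_self _
      have h2 : ∀ᶠ h in 𝓝 (0:V), ‖f (x + h)‖ ≤ |Λ| * ‖h‖ ^ (s + 2) := by
        have : Filter.Tendsto (fun h => x + h) (𝓝 (0:V)) (𝓝 x) := by
          have : Continuous (fun h : V => x + h) := by fun_prop
          simpa using this.tendsto 0
        filter_upwards [this.eventually h1] with h hh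
        simpa using hh
      have h3 : ∀ᶠ h in 𝓝 (0:V), |Λ| * ‖h‖ ^ (s + 1) < c := by
        have : Continuous (fun h : V => |Λ| * ‖h‖ ^ (s + 1)) := by fun_prop
        have := this.tendsto 0
        simp only [norm_zero, ne_eq, Nat.add_eq_zero_iff, one_ne_zero, and_false, not_false_eq_true,
          zero_pow, mul_zero] at this
        exact this.eventually_lt_const hc
      filter_upwards [h2, h3] with h hh2 hh3
      simp only [h0, sub_zero, zero_apply]
      calc ‖f (x + h)‖ ≤ |Λ| * ‖h‖ ^ (s + 2) := hh2
        _ = (|Λ| * ‖h‖ ^ (s + 1)) * ‖h‖ := by ring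
        _ ≤ c * ‖h‖ := by gcongr
    have hf0 : fderiv ℝ f x = 0 := hdx.fderiv
    have ihf := ih (V →L[ℝ] W) (fderiv ℝ f) x Λ hf0
      (by
        filter_upwards [hs] with z hz hzx
        exact (hz hzx).fderiv_right (by norm_cast))
      (by
        filter_upwards [hb] with z hz hzx i hi
        rw [norm_iteratedFDeriv_fderiv]
        have := hz hzx (i+1) (by omega)
        have e : s + 1 + 1 - (i + 1) = s + 1 - i := by omega
        rwa [e] at this)
    refine ⟨?_, ?_⟩
    · have := (contDiffAt_succ_iff_hasFDerivAt (𝕜 := ℝ) (f := f) (x := x) (n := s)).2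
        ⟨fderiv ℝ f, ⟨_, hs, ?_⟩, ihf.1⟩
      · simpa using this
      · intro z hz
        by_cases hzx : z = x
        · subst hzx; rw [hf0]; exact hdx
        · exact ((hz hzx).differentiableAt (by simp)).hasFDerivAt
    · intro i hi
      cases i with
      | zero => ext v; simp [h0]
      | succ i =>
        have := ihf.2 i (by omega)
        rw [← norm_eq_zero, ← norm_iteratedFDeriv_fderiv, this, norm_zero]

/-- scaled derivative bounds -/
def Bd (m : ℕ) (f : V → W) (z : V) (r Λ : ℝ) : Prop :=
  ∀ i ≤ m, ‖iteratedFDeriv ℝ i f z‖ * r ^ i ≤ Λ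

lemma Bd.mono {m : ℕ} {f : V → W} {z : V} {r r' Λ Λ' : ℝ} (h : Bd m f z r Λ) (hr : 0 ≤ r') (hrr : r' ≤ r)
    (hΛ : Λ ≤ Λ') : Bd m f z r' Λ' := by
  intro i hi
  refine le_trans ?_ ((h i hi).trans hΛ)
  gcongr

lemma Bd.nonneg {m : ℕ} {f : V → W} {z : V} {r Λ : ℝ} (h : Bd m f z r Λ) : 0 ≤ Λ := by
  have := h 0 (Nat.zero_le _)
  simp at this
  exact (norm_nonneg _).trans this

lemma Bd.add {m : ℕ} {f g : V → W} {z : V} {r Λ Λ' : ℝ} (hr : 0 ≤ r)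
    (hf : ContDiff ℝ (⊤ : ℕ∞) f) (hg : ContDiff ℝ (⊤ : ℕ∞) g)
    (h : Bd m f z r Λ) (h' : Bd m g z r Λ') : Bd m (fun y => f y + g y) z r (Λ + Λ') := by
  intro i hi
  have e : iteratedFDeriv ℝ i (fun y => f y + g y) z = iteratedFDeriv ℝ i f z + iteratedFDeriv ℝ i g z :=
    iteratedFDeriv_add_apply (hf.contDiffAt.of_le (by exact_mod_cast le_top))
      (hg.contDiffAt.of_le (by exact_mod_cast le_top))
  rw [e]
  have := norm_add_le (iteratedFDeriv ℝ i f z) (iteratedFDeriv ℝ i g z)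
  have h1 := h i hi
  have h2 := h' i hi
  calc _ ≤ (‖iteratedFDeriv ℝ i f z‖ + ‖iteratedFDeriv ℝ i g z‖) * r ^ i := by gcongr
    _ ≤ _ := by linarith

lemma Bd.neg {m : ℕ} {f : V → W} {z : V} {r Λ : ℝ}
    (h : Bd m f z r Λ) : Bd m (fun y => - f y) z r Λ := by
  intro i hi
  have e : iteratedFDeriv ℝ i (fun y => - f y) z = - iteratedFDeriv ℝ i f z :=
    iteratedFDeriv_neg_apply
  rw [e, norm_neg]; exact h i hi

lemma Bd.const {m : ℕ} {c : W} {z : V} {r : ℝ} : Bd m (fun _ : V => c) z r ‖c‖ := by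
  intro i hi
  cases i with
  | zero => simp
  | succ i => simp [iteratedFDeriv_const_of_ne (𝕜 := ℝ) (Nat.succ_ne_zero i) c]

lemma Bd.mul {m : ℕ} {f g : V → ℝ} {z : V} {r Λ Λ' : ℝ} (hr : 0 ≤ r)
    (hf : ContDiff ℝ (⊤ : ℕ∞) f) (hg : ContDiff ℝ (⊤ : ℕ∞) g)
    (h : Bd m f z r Λ) (h' : Bd m g z r Λ') : Bd m (fun y => f y * g y) z r (2 ^ m * (Λ * Λ')) := by
  intro i hi
  have hΛ := h.nonneg
  have hΛ' := h'.nonneg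
  have := norm_iteratedFDeriv_mul_le hf hg z (n := i) (by exact_mod_cast le_top)
  calc ‖iteratedFDeriv ℝ i (fun y => f y * g y) z‖ * r ^ i
      ≤ (∑ j ∈ Finset.range (i + 1),
      (i.choose j : ℝ) * ‖iteratedFDeriv ℝ j f z‖ * ‖iteratedFDeriv ℝ (i - j) g z‖) * r ^ i := by gcongr
    _ = ∑ j ∈ Finset.range (i + 1),
      (i.choose j : ℝ) * ((‖iteratedFDeriv ℝ j f z‖ * r ^ j) * (‖iteratedFDeriv ℝ (i - j) g z‖ * r ^ (i-j))) := by
        rw [Finset.sum_mul]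
        refine Finset.sum_congr rfl fun j hj => ?_
        have : r ^ i = r ^ j * r ^ (i - j) := by
          rw [← pow_add]; congr 1; simp at hj; omega
        rw [this]; ring
    _ ≤ ∑ j ∈ Finset.range (i + 1), (i.choose j : ℝ) * (Λ * Λ') := by
        refine Finset.sum_le_sum fun j hj => ?_
        simp at hj
        gcongr
        · exact h j (by omega)
        · exact h' (i-j) (by omega)
    _ = 2 ^ i * (Λ * Λ') := by
        rw [← Finset.sum_mul]; congr 1
        exact_mod_cast Nat.sum_range_choose i
    _ ≤ _ := by
        gcongr
        norm_num

lemma Bd.sum {ι : Type} {m : ℕ} (J K : Finset ι) (f : ι → V → W) {z : V} {r Λ : ℝ} (hr : 0 ≤ r)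
    (hΛ : 0 ≤ Λ)
    (hf : ∀ j ∈ J, ContDiff ℝ (⊤ : ℕ∞) (f j)) 
    (h : ∀ j ∈ J, j ∈ K → Bd m (f j) z r Λ) 
    (h0 : ∀ j ∈ J, j ∉ K → ∀ i ≤ m, iteratedFDeriv ℝ i (f j) z = 0) :
    Bd m (fun y => ∑ j ∈ J, f j y) z r (K.card * Λ) := by
  classical
  intro i hi
  have e : iteratedFDeriv ℝ i (fun y => ∑ j ∈ J, f j y) z = ∑ j ∈ J, iteratedFDeriv ℝ i (f j) z := by
    exact iteratedFDeriv_fun_sum_apply (fun j hj => (hf j hj).contDiffAt.of_le (by exact_mod_cast le_top))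
  rw [e]
  calc _ ≤ (∑ j ∈ J, ‖iteratedFDeriv ℝ i (f j) z‖) * r ^ i := by
        gcongr; exact norm_sum_le _ _
    _ = ∑ j ∈ J, ‖iteratedFDeriv ℝ i (f j) z‖ * r ^ i := by rw [Finset.sum_mul]
    _ ≤ ∑ j ∈ J, if j ∈ K then Λ else 0 := by
        refine Finset.sum_le_sum fun j hj => ?_
        split_ifs with hk
        · exact h j hj hk i hi
        · simp [h0 j hj hk i hi]
    _ = ∑ j ∈ J ∩ K, Λ := by rw [← Finset.sum_filter, Finset.filter_mem_eq_inter]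
    _ ≤ K.card * Λ := by
        rw [Finset.sum_const, nsmul_eq_mul]
        gcongr
        exact Finset.inter_subset_right

end

section

lemma contDiff_peval {n : ℕ} (P : MPoly n) (N : WithTop ℕ∞) : ContDiff ℝ N (peval P) := by
  unfold peval
  induction P using MvPolynomial.induction_on with
  | C a => simpa using contDiff_const
  | add p q hp hq => simpa using hp.add hq
  | mul_X p i hp =>
    have : ContDiff ℝ N (fun x : Euc n => x i) := (EuclideanSpace.proj (𝕜 := ℝ) i).contDiff
    simpa using hp.mul this

lemma peval_sub {n : ℕ} (P Q : MPoly n) : peval (P - Q) = fun y => peval P y - peval Q y := by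
  funext y; simp [peval]

lemma pD_peval {n : ℕ} (i : Fin n) (P : MPoly n) : pD i (peval P) = peval (MvPolynomial.pderiv i P) := by
  have hd : ∀ (Q : MPoly n) x, DifferentiableAt ℝ (peval Q) x :=
    fun Q x => (contDiff_peval Q 1).differentiable (by simp) x
  funext x
  induction P using MvPolynomial.induction_on with
  | C a => 
    have : peval (MvPolynomial.C a : MPoly n) = fun _ => a := by funext y; simp [peval]
    unfold pD; rw [this]; simp [peval]
  | add p q hp hq =>
    have : peval (p + q) = fun y => peval p y + peval q y := by funext y; simp [peval]
    have h2 : pD i (peval (p+q)) x = pD i (peval p) x + pD i (peval q) x := by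
      unfold pD; rw [this, fderiv_fun_add (hd _ _) (hd _ _)]; simp
    rw [h2, hp, hq]; simp [peval]
  | mul_X p j hp =>
    have : peval (p * MvPolynomial.X j) = fun y => peval p y * y j := by funext y; simp [peval]
    have hj : HasFDerivAt (fun y : Euc n => y j) (EuclideanSpace.proj (𝕜 := ℝ) j : Euc n →L[ℝ] ℝ) x :=
      (EuclideanSpace.proj (𝕜 := ℝ) j : Euc n →L[ℝ] ℝ).hasFDerivAt
    have h2 : pD i (peval (p * MvPolynomial.X j)) x =
        pD i (peval p) x * x j + peval p x * (if j = i then 1 else 0) := by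
      unfold pD; rw [this, fderiv_fun_mul (hd _ _) hj.differentiableAt, hj.fderiv]
      simp
      rcases eq_or_ne j i with h | h <;> simp [h] <;> ring
    rw [h2, hp]
    simp only [Derivation.leibniz, smul_eq_mul, MvPolynomial.pderiv_X, peval, map_add, map_mul,
      MvPolynomial.eval_X, Pi.single_apply]
    split_ifs <;> simp <;> ring

lemma foldr_pD_peval {n : ℕ} (L : List (Fin n)) (P : MPoly n) :
    L.foldr pD (peval P) = peval (L.foldr (fun i Q => MvPolynomial.pderiv i Q) P) := by
  induction L with
  | nil => rfl
  | cons i T ih => simp only [List.foldr_cons]; rw [ih, pD_peval]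

lemma foldr_pderiv_monomial {n : ℕ} (L : List (Fin n)) (s : Fin n →₀ ℕ) (a : ℝ) :
    ∃ s' a', L.foldr (fun i Q => MvPolynomial.pderiv i Q) (MvPolynomial.monomial s a : MPoly n)
      = MvPolynomial.monomial s' a' ∧ (a' = 0 ∨ s'.degree + L.length ≤ s.degree) := by
  induction L with
  | nil => exact ⟨s, a, rfl, Or.inr (by simp)⟩
  | cons i T ih =>
    obtain ⟨s', a', h, h'⟩ := ih
    simp only [List.foldr_cons]
    rw [h, MvPolynomial.pderiv_monomial]
    refine ⟨_, _, rfl, ?_⟩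
    rcases h' with h' | h'
    · left; simp [h']
    · by_cases hi : s' i = 0
      · left; simp [hi]
      · right
        have hle : Finsupp.single i 1 ≤ s' := by
          rw [Finsupp.single_le_iff]; omega
        have e : s' = (s' - Finsupp.single i 1) + Finsupp.single i 1 := (tsub_add_cancel_of_le hle).symm
        have e2 : s'.degree = (s' - Finsupp.single i 1).degree + 1 := by
          conv_lhs => rw [e]
          rw [map_add]; simp
        simp only [List.length_cons]
        omega

lemma foldr_pderiv_eq_zero {n : ℕ} (L : List (Fin n)) (P : MPoly n) (h : P.totalDegree < L.length) :
    L.foldr (fun i Q => MvPolynomial.pderiv i Q) P = 0 := by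
  have hsum : ∀ (S : Finset (Fin n →₀ ℕ)) (f : (Fin n →₀ ℕ) → MPoly n),
      L.foldr (fun i Q => MvPolynomial.pderiv i Q) (∑ s ∈ S, f s) =
      ∑ s ∈ S, L.foldr (fun i Q => MvPolynomial.pderiv i Q) (f s) := by
    intro S f
    clear h
    induction L with
    | nil => rfl
    | cons i T ih => simp only [List.foldr_cons]; rw [ih, map_sum]
  rw [P.as_sum, hsum]
  refine Finset.sum_eq_zero fun s hs => ?_
  obtain ⟨s', a', h1, h2⟩ := foldr_pderiv_monomial L s (P.coeff s)
  rw [h1]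
  have hd : s.degree ≤ P.totalDegree := by
    have := MvPolynomial.le_totalDegree hs
    exact this
  rcases h2 with h2 | h2
  · simp [h2]
  · omega

lemma mD_peval_eq_zero {n : ℕ} (α : Fin n → ℕ) (P : MPoly n) (h : P.totalDegree < deg α) (z : Euc n) :
    mD α (peval P) z = 0 := by
  rw [mD_eq_foldr, foldr_pD_peval, foldr_pderiv_eq_zero _ _ (by rwa [mList_length])]
  simp [peval]

lemma poly_bound {n m : ℕ} (hn : 0 < n) (P : MPoly n) (hP : P.totalDegree ≤ m - 1) (hm : 0 < m)
    (x z : Euc n) (r c Λ : ℝ) (hr : 0 < r) (hc : 0 ≤ c) (hΛ : 0 ≤ Λ)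
    (h : ∀ β : Fin n → ℕ, deg β ≤ m - 1 → |mD β (peval P) x| * r ^ deg β ≤ Λ)
    (hz : ‖z - x‖ ≤ c * r) :
    Bd m (peval P) z r ((1 + c) ^ m * ((n:ℝ) ^ m * Λ)) := by
  have hn1 : (1:ℝ) ≤ n := by exact_mod_cast hn
  intro i hi
  refine taylor_bd m (peval P) (contDiff_peval P _) x r c _ hr hc (by positivity) ?_ ?_ i hi z
    (by simpa [dist_eq_norm] using hz)
  · intro i hi
    have := norm_le_mD i (peval P) (contDiff_peval P _) x (Λ / r ^ i) (by positivity) (by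
      intro α hα
      rw [le_div_iff₀ (by positivity), ← hα]
      exact h α (by omega))
    calc _ ≤ ((n:ℝ) ^ i * (Λ / r ^ i)) * r ^ i := by gcongr
      _ = (n:ℝ) ^ i * Λ := by field_simp
      _ ≤ _ := by gcongr
  · intro y _
    have := norm_le_mD m (peval P) (contDiff_peval P _) y 0 le_rfl (by
      intro α hα
      rw [mD_peval_eq_zero α P (by omega)]; simp)
    have h0 : ‖iteratedFDeriv ℝ m (peval P) y‖ = 0 := le_antisymm (by simpa using this) (norm_nonneg _)
    rw [h0, zero_mul]; positivity

lemma coord_lip {n : ℕ} (f : Euc n → ℝ) (M : ℝ) (hM : 0 ≤ M)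
    (h : ∀ i : Fin n, ∀ x : Euc n, ∀ t : ℝ, |f (x + t • EuclideanSpace.single i (1 : ℝ)) - f x| ≤ M * |t|)
    (x z : Euc n) : |f z - f x| ≤ n * M * ‖z - x‖ := by
  have key : ∀ s : Finset (Fin n),
      |f (x + ∑ i ∈ s, ((z - x) i) • EuclideanSpace.single i (1:ℝ)) - f x| ≤ ∑ i ∈ s, M * |(z - x) i| := by
    classical
    intro s
    induction s using Finset.induction_on with
    | empty => simp
    | insert a s ha ih =>
      rw [Finset.sum_insert ha, Finset.sum_insert ha, add_comm (((z - x) a) • _), ← add_assoc]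
      have h1 := h a (x + ∑ i ∈ s, ((z - x) i) • EuclideanSpace.single i (1:ℝ)) ((z - x) a)
      refine (abs_sub_le _ _ _).trans (add_le_add h1 ih)
  have e : x + ∑ i, ((z - x) i) • EuclideanSpace.single i (1:ℝ) = z := by
    ext l; simp [Pi.single_apply]
  have := key Finset.univ
  rw [e] at this
  refine this.trans ?_
  calc _ ≤ ∑ i : Fin n, M * ‖z - x‖ := by
        refine Finset.sum_le_sum fun i _ => ?_
        gcongr
        exact PiLp.norm_apply_le (z - x) i
    _ = _ := by simp; ring

lemma gamma_nonneg {m n : ℕ} (hm : 0 < m) (hn : 0 < n) (x : Euc n) (M : ℝ) (hM : 0 < M) (P : MPoly n)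
    (hP : P ∈ GammaStar' m n x M) (z : Euc n) :
    0 ≤ peval P z + (2 ^ m * (n:ℝ) ^ m * M) * ‖z - x‖ ^ m := by
  obtain ⟨G, ⟨hG, hG1, hG2⟩, hG0, hdeg, hjet⟩ := hP
  by_cases hzx : z = x
  · subst hzx
    have := hjet (fun _ => 0) (by simp [deg])
    have e : ∀ f : Euc n → ℝ, mD (fun _ => 0) f = f := by
      intro f; rw [mD_eq_foldr]
      have : (mList (fun _ : Fin n => 0)) = [] := by
        rw [← List.length_eq_zero_iff, mList_length]; simp [deg]
      rw [this]; rfl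
    rw [e, e] at this
    rw [this]
    have := hG0 z
    simp only [sub_self, norm_zero, zero_pow (by omega : m ≠ 0), mul_zero, add_zero]
    exact this
  obtain ⟨k, rfl⟩ : ∃ k, m = k + 1 := ⟨m - 1, by omega⟩
  simp only [Nat.add_sub_cancel] at *
  set g : Euc n → ℝ := fun y => G y - peval P y with hg
  have hPc : ∀ N, ContDiff ℝ N (peval P) := contDiff_peval P
  have hgc : ContDiff ℝ (k : ℕ∞) g := hG.sub (hPc _)
  have hr : 0 < ‖z - x‖ := by rw [norm_pos_iff, sub_ne_zero]; exact hzx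
  have hmD : ∀ α : Fin n → ℕ, deg α ≤ k → ∀ y, mD α g y = mD α G y - mD α (peval P) y := by
    intro α hα y
    have hα' : ((deg α : ℕ∞) : WithTop ℕ∞) ≤ ((k:ℕ∞) : WithTop ℕ∞) := by exact_mod_cast hα
    rw [mD_apply α g (hgc.of_le hα'), mD_apply α G (hG.of_le hα'), mD_apply α _ (hPc _)]
    have hα2 : (((mList α).length : ℕ) : WithTop ℕ∞) ≤ ((k:ℕ∞) : WithTop ℕ∞) := by
      rw [mList_length]; exact_mod_cast hα
    have : iteratedFDeriv ℝ (mList α).length g y = iteratedFDeriv ℝ (mList α).length G y -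
        iteratedFDeriv ℝ (mList α).length (peval P) y :=
      iteratedFDeriv_sub_apply (hG.contDiffAt.of_le hα2) (hPc _).contDiffAt
    rw [this]; rfl
  have hn1 : (1:ℝ) ≤ n := by exact_mod_cast hn
  have htop : ∀ y, ‖iteratedFDeriv ℝ k g y‖ ≤ (n:ℝ) ^ k * (n * M * ‖y - x‖) := by
    intro y
    refine norm_le_mD k g hgc y _ (by positivity) ?_
    intro α hα
    have hconst : mD α (peval P) y = mD α (peval P) x := by
      have := coord_lip (mD α (peval P)) 0 le_rfl (by
        intro i w t
        have hz : ∀ u, pD i (mD α (peval P)) u = 0 := by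
          intro u
          rw [mD_eq_foldr]
          change (i :: mList α).foldr pD (peval P) u = 0
          rw [foldr_pD_peval, foldr_pderiv_eq_zero _ _ (by simp [mList_length]; omega)]
          simp [peval]
        have hd : ∀ u, HasDerivAt (fun t : ℝ => mD α (peval P) (w + t • EuclideanSpace.single i (1:ℝ))) 0 u := by
          intro u
          have hc : Differentiable ℝ (mD α (peval P)) := by
            rw [mD_eq_foldr, foldr_pD_peval]
            exact (contDiff_peval _ 1).differentiable (by simp)
          have h1 := (hc (w + u • EuclideanSpace.single i (1:ℝ))).hasFDerivAt
          have h2 : HasDerivAt (fun t : ℝ => w + t • EuclideanSpace.single i (1:ℝ))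
              (EuclideanSpace.single i (1:ℝ)) u := by
            simpa using ((hasDerivAt_id u).smul_const (EuclideanSpace.single i (1:ℝ))).const_add w
          have h3 := h1.comp_hasDerivAt u h2
          have h4 := hz (w + u • EuclideanSpace.single i (1:ℝ))
          unfold pD at h4
          rw [h4] at h3
          exact h3
        have := is_const_of_deriv_eq_zero (fun u => (hd u).differentiableAt) (fun u => (hd u).deriv) t 0
        simp at this
        simp [this]) x y
      simp at this
      linarith
    have hl := coord_lip (mD α G) M hM.le (hG2 α hα) x y
    rw [hmD α hα.le, hconst, hjet α hα.le]
    exact hl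
  have := taylor_bd k g hgc x ‖z - x‖ 1 ((n:ℝ) ^ (k+1) * M * ‖z - x‖ ^ (k+1)) hr zero_le_one (by positivity)
    (by
      intro i hi
      have : ‖iteratedFDeriv ℝ i g x‖ ≤ (n:ℝ) ^ i * 0 := by
        refine norm_le_mD i g (hgc.of_le (by exact_mod_cast hi.le)) x 0 le_rfl ?_
        intro α hα
        rw [hmD α (by omega), hjet α (by omega)]; simp
      have h0 : ‖iteratedFDeriv ℝ i g x‖ = 0 := le_antisymm (by simpa using this) (norm_nonneg _)
      rw [h0, zero_mul]; positivity)
    (by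
      intro y hy
      have hy' : ‖y - x‖ ≤ ‖z - x‖ := by simpa [dist_eq_norm] using hy
      calc _ ≤ ((n:ℝ) ^ k * (n * M * ‖y - x‖)) * ‖z - x‖ ^ k := by gcongr; exact htop y
        _ ≤ ((n:ℝ) ^ k * (n * M * ‖z - x‖)) * ‖z - x‖ ^ k := by gcongr
        _ = _ := by ring)
    0 (Nat.zero_le _) z (by simp [dist_eq_norm])
  simp only [norm_iteratedFDeriv_zero, pow_zero, mul_one] at this
  have h5 : G z - peval P z ≤ (1 + 1) ^ k * ((n:ℝ) ^ (k+1) * M * ‖z - x‖ ^ (k+1)) :=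
    (le_abs_self _).trans this
  have h6 : (1 + 1 : ℝ) ^ k * ((n:ℝ) ^ (k+1) * M * ‖z - x‖ ^ (k+1)) ≤
      2 ^ (k+1) * ((n:ℝ) ^ (k+1) * M * ‖z - x‖ ^ (k+1)) := by
    have : (1 + 1 : ℝ) = 2 := by norm_num
    rw [this]
    gcongr
    · norm_num
    · omega
  have := hG0 z
  nlinarith

lemma gamma_bound {m n : ℕ} (x : Euc n) (M : ℝ) (P : MPoly n)
    (hP : P ∈ GammaStar' m n x M) (β : Fin n → ℕ) (hβ : deg β ≤ m - 1) : |mD β (peval P) x| ≤ M := by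
  obtain ⟨G, ⟨hG, hG1, hG2⟩, hG0, hdeg, hjet⟩ := hP
  rw [hjet β hβ]; exact hG1 β hβ x

end

section

/-- one-dimensional bump -/
def hb (t : ℝ) : ℝ := Real.smoothTransition (t + 1) * Real.smoothTransition (1 - t)

lemma hb_contDiff (N : ℕ∞) : ContDiff ℝ N hb := by
  unfold hb
  exact (Real.smoothTransition.contDiff.comp (contDiff_id.add contDiff_const)).mul
    (Real.smoothTransition.contDiff.comp (contDiff_const.sub contDiff_id))

lemma hb_nonneg (t : ℝ) : 0 ≤ hb t :=
  mul_nonneg (Real.smoothTransition.nonneg _) (Real.smoothTransition.nonneg _)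

lemma hb_zero (t : ℝ) (h : 1 ≤ |t|) : hb t = 0 := by
  unfold hb
  rcases le_abs.1 h with h | h
  · rw [Real.smoothTransition.zero_of_nonpos (x := 1 - t) (by linarith), mul_zero]
  · rw [Real.smoothTransition.zero_of_nonpos (x := t + 1) (by linarith), zero_mul]

lemma st_add (x : ℝ) : Real.smoothTransition x + Real.smoothTransition (1 - x) = 1 := by
  unfold Real.smoothTransition
  have h := Real.smoothTransition.pos_denom x
  have e : 1 - (1 - x) = x := by ring
  rw [e, add_comm (expNegInvGlue (1 - x)), ← add_div, div_self h.ne']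

lemma hb_sum (y : ℝ) : ∑ a ∈ Finset.Icc (⌊y⌋ - 1) (⌊y⌋ + 1), hb (y - (a : ℤ)) = 1 := by
  have h0 := Int.floor_le y
  have h1 := Int.lt_floor_add_one y
  have e : Finset.Icc (⌊y⌋ - 1) (⌊y⌋ + 1) = {⌊y⌋ - 1, ⌊y⌋, ⌊y⌋ + 1} := by
    ext a; simp only [Finset.mem_Icc, Finset.mem_insert, Finset.mem_singleton]; omega
  rw [e, Finset.sum_insert (by simp; omega), Finset.sum_insert (by simp), Finset.sum_singleton]
  push_cast
  rw [hb_zero (y - (⌊y⌋ - 1)) (by rw [le_abs]; left; linarith), zero_add]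
  unfold hb
  rw [Real.smoothTransition.one_of_one_le (x := y - ⌊y⌋ + 1) (by linarith),
    Real.smoothTransition.one_of_one_le (x := 1 - (y - (⌊y⌋ + 1))) (by linarith), one_mul, mul_one]
  have := st_add (y - ⌊y⌋)
  rw [show y - (⌊y⌋ + 1) + 1 = y - ⌊y⌋ by ring]
  linarith

/-- product bump -/
def Phi {n : ℕ} (y : Euc n) : ℝ := ∏ i, hb (y i)

lemma Phi_contDiff {n : ℕ} (N : ℕ∞) : ContDiff ℝ N (Phi (n := n)) := by
  unfold Phi
  refine contDiff_prod fun i _ => (hb_contDiff N).comp ?_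
  exact (EuclideanSpace.proj (𝕜 := ℝ) i : Euc n →L[ℝ] ℝ).contDiff

lemma norm_le_sum_abs {n : ℕ} (y : Euc n) : ‖y‖ ≤ ∑ i, |y i| := by
  have e : y = ∑ i, (y i) • EuclideanSpace.single i (1:ℝ) := by
    ext l; simp [Pi.single_apply]
  conv_lhs => rw [e]
  refine (norm_sum_le _ _).trans (le_of_eq ?_)
  refine Finset.sum_congr rfl fun i _ => ?_
  rw [norm_smul]; simp

lemma Phi_compact {n : ℕ} : HasCompactSupport (Phi (n := n)) := by
  refine HasCompactSupport.intro (isCompact_closedBall (0 : Euc n) n) ?_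
  intro y hy
  by_contra h
  apply hy
  rw [mem_closedBall_zero_iff]
  refine (norm_le_sum_abs y).trans ?_
  calc ∑ i, |y i| ≤ ∑ i : Fin n, (1:ℝ) := by
        refine Finset.sum_le_sum fun i _ => ?_
        by_contra h1
        exact h (Finset.prod_eq_zero (Finset.mem_univ i) (hb_zero _ (not_le.1 h1).le))
    _ = n := by simp

lemma Phi_bound (n m : ℕ) : ∃ B : ℝ, 0 ≤ B ∧ ∀ i ≤ m, ∀ y : Euc n, ‖iteratedFDeriv ℝ i Phi y‖ ≤ B := by
  have : ∀ i : ℕ, ∃ C, ∀ y : Euc n, ‖iteratedFDeriv ℝ i Phi y‖ ≤ C := by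
    intro i
    have hc : Continuous (iteratedFDeriv ℝ i (Phi (n := n))) :=
      (Phi_contDiff (n := n) i).continuous_iteratedFDeriv (by exact_mod_cast le_rfl)
    exact (Phi_compact.iteratedFDeriv i).exists_bound_of_continuous hc
  choose C hC using this
  refine ⟨∑ i ∈ Finset.range (m+1), |C i|, Finset.sum_nonneg fun _ _ => abs_nonneg _, ?_⟩
  intro i hi y
  refine (hC i y).trans ((le_abs_self _).trans ?_)
  exact Finset.single_le_sum (f := fun i => |C i|) (fun _ _ => abs_nonneg _) (by simp; omega)

/-- lattice point -/
def pt {n : ℕ} (r : ℝ) (j : Fin n → ℤ) : Euc n := WithLp.toLp 2 (fun l => r * (j l : ℝ))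

/-- scaled, translated bump -/
def phi {n : ℕ} (r : ℝ) (j : Fin n → ℤ) (z : Euc n) : ℝ := Phi (r⁻¹ • z - pt 1 j)

/-- closeness to the lattice point -/
def near {n : ℕ} (r : ℝ) (j : Fin n → ℤ) (z : Euc n) : Prop := ∀ l, |r⁻¹ * z l - j l| ≤ 1

lemma phi_eq {n : ℕ} (r : ℝ) (j : Fin n → ℤ) (z : Euc n) : phi r j z = ∏ l, hb (r⁻¹ * z l - j l) := by
  simp [phi, Phi, pt]

lemma phi_nonneg {n : ℕ} (r : ℝ) (j : Fin n → ℤ) (z : Euc n) : 0 ≤ phi r j z := by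
  rw [phi_eq]; exact Finset.prod_nonneg fun _ _ => hb_nonneg _

lemma phi_contDiff {n : ℕ} (r : ℝ) (j : Fin n → ℤ) (N : ℕ∞) : ContDiff ℝ N (phi r j) := by
  unfold phi
  exact (Phi_contDiff N).comp ((contDiff_const_smul r⁻¹).sub contDiff_const)

lemma phi_zero_of_not_near {n : ℕ} (r : ℝ) (j : Fin n → ℤ) (z : Euc n) (h : ¬ near r j z) :
    ∀ᶠ y in nhds z, phi r j y = 0 := by
  unfold near at h
  push Not at h
  obtain ⟨l, hl⟩ := h
  have hc : Continuous fun y : Euc n => |r⁻¹ * y l - j l| := by fun_prop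
  filter_upwards [hc.continuousAt.eventually (lt_mem_nhds hl)] with y hy
  rw [phi_eq]
  exact Finset.prod_eq_zero (Finset.mem_univ l) (hb_zero _ hy.le)

lemma near_of_phi {n : ℕ} (r : ℝ) (j : Fin n → ℤ) (z : Euc n) (h : phi r j z ≠ 0) : near r j z := by
  by_contra h1
  exact h (phi_zero_of_not_near r j z h1).self_of_nhds

lemma near_dist {n : ℕ} {r : ℝ} (hr : 0 < r) {j : Fin n → ℤ} {z : Euc n} (h : near r j z) :
    ‖z - pt r j‖ ≤ n * r := by
  refine (norm_le_sum_abs _).trans ?_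
  calc _ ≤ ∑ i : Fin n, r := by
        refine Finset.sum_le_sum fun i _ => ?_
        have e : (z - pt r j) i = r * (r⁻¹ * z i - j i) := by
          simp [pt]; field_simp
        rw [e, abs_mul, abs_of_pos hr]
        have := h i
        nlinarith
    _ = _ := by simp

/-- the box of lattice indices -/
def lbox {n : ℕ} (r : ℝ) (z : Euc n) : Finset (Fin n → ℤ) :=
  Fintype.piFinset fun l => Finset.Icc (⌊r⁻¹ * z l⌋ - 1) (⌊r⁻¹ * z l⌋ + 1)

lemma lbox_card {n : ℕ} (r : ℝ) (z : Euc n) : (lbox r z).card = 3 ^ n := by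
  simp only [lbox, Fintype.card_piFinset, Int.card_Icc]
  have : ∀ x : Fin n, (⌊r⁻¹ * z x⌋ + 1 + 1 - (⌊r⁻¹ * z x⌋ - 1)).toNat = 3 := by intro x; omega
  simp [this]

lemma near_mem {n : ℕ} {r : ℝ} {j : Fin n → ℤ} {z : Euc n} (h : near r j z) : j ∈ lbox r z := by
  simp only [lbox, Fintype.mem_piFinset, Finset.mem_Icc]
  intro l
  have h0 := Int.floor_le (r⁻¹ * z l)
  have h1 := Int.lt_floor_add_one (r⁻¹ * z l)
  have h2 := abs_le.1 (h l)
  constructor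
  · have : ((⌊r⁻¹ * z l⌋ - 1 : ℤ) : ℝ) ≤ j l := by push_cast; linarith
    exact_mod_cast this
  · have : ((j l : ℤ) : ℝ) < (⌊r⁻¹ * z l⌋ + 2 : ℤ) := by push_cast; linarith
    have : j l < ⌊r⁻¹ * z l⌋ + 2 := by exact_mod_cast this
    omega

lemma sum_phi_box {n : ℕ} (r : ℝ) (z : Euc n) : ∑ j ∈ lbox r z, phi r j z = 1 := by
  simp only [phi_eq, lbox]
  have := Finset.prod_univ_sum (fun l : Fin n => Finset.Icc (⌊r⁻¹ * z l⌋ - 1) (⌊r⁻¹ * z l⌋ + 1))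
    (fun l (a : ℤ) => hb (r⁻¹ * z l - a))
  rw [← this]
  exact Finset.prod_eq_one fun l _ => hb_sum _

lemma sum_phi_eq_one {n : ℕ} (r : ℝ) (z : Euc n) (J : Finset (Fin n → ℤ))
    (h : ∀ j, near r j z → j ∈ J) : ∑ j ∈ J, phi r j z = 1 := by
  classical
  rw [← sum_phi_box r z]
  have h1 : ∑ j ∈ J, phi r j z = ∑ j ∈ J ∪ lbox r z, phi r j z := by
    refine Finset.sum_subset Finset.subset_union_left fun j _ hj => ?_
    by_contra h2
    exact hj (h j (near_of_phi _ _ _ h2))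
  rw [h1]
  symm
  refine Finset.sum_subset Finset.subset_union_right fun j _ hj => ?_
  by_contra h2
  exact hj (near_mem (near_of_phi _ _ _ h2))

lemma sum_phi_le_one {n : ℕ} (r : ℝ) (z : Euc n) (J : Finset (Fin n → ℤ)) :
    ∑ j ∈ J, phi r j z ≤ 1 := by
  classical
  rw [← sum_phi_eq_one r z (J ∪ lbox r z) (fun j hj => Finset.mem_union_right _ (near_mem hj))]
  exact Finset.sum_le_sum_of_subset_of_nonneg Finset.subset_union_left fun _ _ _ => phi_nonneg _ _ _

lemma phi_Bd {n m : ℕ} {B : ℝ} (hB : ∀ i ≤ m, ∀ y : Euc n, ‖iteratedFDeriv ℝ i Phi y‖ ≤ B)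
    {r : ℝ} (hr : 0 < r) (j : Fin n → ℤ) (z : Euc n) : Bd m (phi r j) z r B := by
  intro i hi
  have h1 : iteratedFDeriv ℝ i (phi r j) z = r⁻¹ ^ i • iteratedFDeriv ℝ i (fun w => Phi (w - pt 1 j)) (r⁻¹ • z) := by
    have hc : ContDiff ℝ (i : ℕ∞) (fun w : Euc n => Phi (w - pt 1 j)) :=
      (Phi_contDiff i).comp (contDiff_id.sub contDiff_const)
    have := iteratedFDeriv_comp_const_smul (𝕜 := ℝ) (f := fun w : Euc n => Phi (w - pt 1 j)) (i := i)
      r⁻¹ (by exact_mod_cast hc)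
    exact congrFun this z
  rw [h1, iteratedFDeriv_comp_sub, norm_smul, norm_pow, norm_inv, Real.norm_of_nonneg hr.le]
  have := hB i hi (r⁻¹ • z - pt 1 j)
  have hri : 0 < r ^ i := by positivity
  calc _ = ‖iteratedFDeriv ℝ i Phi (r⁻¹ • z - pt 1 j)‖ := by
        rw [inv_pow, mul_right_comm, inv_mul_cancel₀ hri.ne', one_mul]
    _ ≤ B := this

lemma S_Bd {n m : ℕ} {B : ℝ} (hB : ∀ i ≤ m, ∀ y : Euc n, ‖iteratedFDeriv ℝ i Phi y‖ ≤ B) (hB0 : 0 ≤ B)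
    {r : ℝ} (hr : 0 < r) (J : Finset (Fin n → ℤ)) (q : (Fin n → ℤ) → Euc n → ℝ)
    (hq : ∀ j ∈ J, ContDiff ℝ (⊤ : ℕ∞) (q j)) (z : Euc n) (Λ : ℝ) (hΛ : 0 ≤ Λ)
    (h : ∀ j ∈ J, near r j z → Bd m (q j) z r Λ) :
    Bd m (fun y => ∑ j ∈ J, phi r j y * q j y) z r (3 ^ n * (2 ^ m * (B * Λ))) := by
  classical
  have h1 := Bd.sum (m := m) J ((lbox r z).filter fun j => near r j z) (fun j y => phi r j y * q j y) (z := z) (r := r)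
    (Λ := 2 ^ m * (B * Λ)) hr.le (by positivity) (fun j hj => (phi_contDiff r j _).mul (hq j hj))
    (by
      intro j hj hK
      rw [Finset.mem_filter] at hK
      exact Bd.mul hr.le (phi_contDiff r j _) (hq j hj) (phi_Bd hB hr j z) (h j hj hK.2))
    (by
      intro j hj hK i hi
      have hnn : ¬ near r j z := fun hh => hK (Finset.mem_filter.2 ⟨near_mem hh, hh⟩)
      have : (fun y => phi r j y * q j y) =ᶠ[nhds z] fun _ => 0 := by
        filter_upwards [phi_zero_of_not_near r j z hnn] with y hy
        rw [hy, zero_mul]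
      rw [(this.iteratedFDeriv ℝ i).self_of_nhds]
      simp)
  refine h1.mono hr.le le_rfl ?_
  gcongr
  calc _ ≤ ((lbox r z).card : ℝ) := by exact_mod_cast Finset.card_filter_le _ _
    _ = 3 ^ n := by rw [lbox_card]; simp

end

section

/-- the hypotheses -/
structure WData (m n : ℕ) (E : Set (Euc n)) (P : Euc n → MPoly n) (M : ℝ) : Prop where
  hm : 0 < m
  hn : 0 < n
  fin : E.Finite
  ne : E.Nonempty
  hM : 0 < M
  dg : ∀ x ∈ E, MvPolynomial.totalDegree (P x) ≤ m - 1
  gam : ∀ x ∈ E, P x ∈ GammaStar' m n x M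
  comp : ∀ x ∈ E, ∀ y ∈ E, ∀ β : Fin n → ℕ, deg β ≤ m - 1 →
          |mD β (peval (P x - P y)) x| ≤ M * ‖x - y‖ ^ (m - deg β)

open Classical in
/-- nearest point -/
def nr {n : ℕ} (E : Set (Euc n)) (w : Euc n) : Euc n :=
  if h : ∃ x ∈ E, Metric.infDist w E = dist w x then h.choose else 0

open Classical in
/-- indices of relevant bumps -/
def JF {n : ℕ} (E : Set (Euc n)) (r : ℝ) : Finset (Fin n → ℤ) :=
  if h : {j : Fin n → ℤ | Metric.infDist (pt r j) E ≤ 2 * n * r}.Finite then h.toFinset else ∅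

/-- local model -/
def qf {n : ℕ} (m : ℕ) (E : Set (Euc n)) (P : Euc n → MPoly n) (M : ℝ) (r : ℝ) (j : Fin n → ℤ)
    (z : Euc n) : ℝ := peval (P (nr E (pt r j))) z + 2 ^ m * (n:ℝ) ^ m * M * (3 * n * r) ^ m

def eta {n : ℕ} (E : Set (Euc n)) (r : ℝ) (z : Euc n) : ℝ := ∑ j ∈ JF E r, phi r j z

def TT {n : ℕ} (m : ℕ) (E : Set (Euc n)) (P : Euc n → MPoly n) (M : ℝ) (r : ℝ) (z : Euc n) : ℝ :=
  ∑ j ∈ JF E r, phi r j z * qf m E P M r j z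

def SS {n : ℕ} (m : ℕ) (E : Set (Euc n)) (P : Euc n → MPoly n) (M : ℝ) (r : ℝ) (x z : Euc n) : ℝ :=
  ∑ j ∈ JF E r, phi r j z * (qf m E P M r j z - peval (P x) z)

def rk (k : ℕ) : ℝ := (1 / 4) ^ k

def HH {n : ℕ} (m : ℕ) (E : Set (Euc n)) (P : Euc n → MPoly n) (M : ℝ) : ℕ → Euc n → ℝ
  | 0 => TT m E P M (rk 0)
  | k + 1 => fun z => (1 - eta E (rk (k+1)) z) * HH m E P M k z + TT m E P M (rk (k+1)) z

open Classical in
def FF {n : ℕ} (m : ℕ) (E : Set (Euc n)) (P : Euc n → MPoly n) (M : ℝ) (z : Euc n) : ℝ :=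
  if z ∈ E then peval (P z) z else
    if h : ∃ K, 3 * n * rk (K+1) < Metric.infDist z E then HH m E P M (Nat.find h) z else 0

lemma rk_pos (k : ℕ) : 0 < rk k := by unfold rk; positivity
lemma rk_le_one (k : ℕ) : rk k ≤ 1 := pow_le_one₀ (by norm_num) (by norm_num)
lemma rk_succ (k : ℕ) : rk (k+1) = rk k / 4 := by unfold rk; ring
lemma rk_anti {k l : ℕ} (h : k ≤ l) : rk l ≤ rk k := pow_le_pow_of_le_one (by norm_num) (by norm_num) h

lemma infDist_le_add {n : ℕ} (E : Set (Euc n)) (z w : Euc n) :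
    Metric.infDist z E ≤ Metric.infDist w E + ‖z - w‖ := by
  rw [← dist_eq_norm]; exact Metric.infDist_le_infDist_add_dist

variable {m n : ℕ} {E : Set (Euc n)} {P : Euc n → MPoly n} {M : ℝ}

lemma WData.exists_near (D : WData m n E P M) (w : Euc n) : ∃ x ∈ E, Metric.infDist w E = dist w x :=
  D.fin.isCompact.exists_infDist_eq_dist D.ne w

lemma WData.nr_mem (D : WData m n E P M) (w : Euc n) : nr E w ∈ E := by
  unfold nr; rw [dif_pos (D.exists_near w)]; exact (D.exists_near w).choose_spec.1

lemma WData.nr_dist (D : WData m n E P M) (w : Euc n) : ‖w - nr E w‖ = Metric.infDist w E := by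
  unfold nr; rw [dif_pos (D.exists_near w), ← dist_eq_norm]; exact (D.exists_near w).choose_spec.2.symm

lemma WData.mem_JF (D : WData m n E P M) {r : ℝ} (hr : 0 < r) (j : Fin n → ℤ) :
    j ∈ JF E r ↔ Metric.infDist (pt r j) E ≤ 2 * n * r := by
  have hf : {j : Fin n → ℤ | Metric.infDist (pt r j) E ≤ 2 * n * r}.Finite := by
    have : {j : Fin n → ℤ | Metric.infDist (pt r j) E ≤ 2 * n * r} ⊆
        ⋃ x ∈ E, (↑(Fintype.piFinset fun l : Fin n => Finset.Icc ⌈r⁻¹ * x l - 2 * n⌉ ⌊r⁻¹ * x l + 2 * n⌋) : Set (Fin n → ℤ)) := by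
      intro j hj
      have h1 := D.nr_dist (pt r j)
      rw [Set.mem_iUnion₂]
      refine ⟨nr E (pt r j), D.nr_mem _, ?_⟩
      set x := nr E (pt r j)
      rw [Finset.mem_coe, Fintype.mem_piFinset]
      intro l
      have h2 : |r * j l - x l| ≤ 2 * n * r := by
        have h3 : ‖(pt r j - x) l‖ ≤ ‖pt r j - x‖ := PiLp.norm_apply_le _ _
        rw [h1] at h3
        have h4 : (pt r j - x) l = r * j l - x l := by simp [pt]
        rw [h4, Real.norm_eq_abs] at h3
        exact h3.trans hj
      rw [Finset.mem_Icc, Int.ceil_le, Int.le_floor]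
      have h3 := abs_le.1 h2
      have e : x l = r * (r⁻¹ * x l) := by field_simp
      set u := r⁻¹ * x l
      rw [e] at h3
      constructor
      · by_contra hc; push Not at hc; nlinarith
      · by_contra hc; push Not at hc; nlinarith
    exact (D.fin.biUnion fun x _ => Finset.finite_toSet _).subset this
  unfold JF
  rw [dif_pos hf]; simp

lemma WData.near_x (D : WData m n E P M) {r : ℝ} (hr : 0 < r) {j : Fin n → ℤ} (hj : j ∈ JF E r) {z : Euc n}
    (h : near r j z) : ‖z - nr E (pt r j)‖ ≤ 3 * n * r := by
  have h1 := D.nr_dist (pt r j)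
  have h2 := (D.mem_JF hr j).1 hj
  have h3 := near_dist hr h
  have := norm_sub_le_norm_sub_add_norm_sub z (pt r j) (nr E (pt r j))
  linarith

lemma WData.phi_zero (D : WData m n E P M) {r : ℝ} (hr : 0 < r) {j : Fin n → ℤ} (hj : j ∈ JF E r) {z : Euc n}
    (h : 3 * n * r < Metric.infDist z E) : phi r j z = 0 := by
  by_contra h1
  have h2 := near_dist hr (near_of_phi r j z h1)
  have h3 := (D.mem_JF hr j).1 hj
  have := infDist_le_add E z (pt r j)
  linarith

lemma WData.eta_zero (D : WData m n E P M) {r : ℝ} (hr : 0 < r) {z : Euc n}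
    (h : 3 * n * r < Metric.infDist z E) : eta E r z = 0 :=
  Finset.sum_eq_zero fun _ hj => D.phi_zero hr hj h

lemma WData.TT_zero (D : WData m n E P M) {r : ℝ} (hr : 0 < r) {z : Euc n}
    (h : 3 * n * r < Metric.infDist z E) : TT m E P M r z = 0 :=
  Finset.sum_eq_zero fun _ hj => by rw [D.phi_zero hr hj h, zero_mul]

lemma WData.eta_one (D : WData m n E P M) {r : ℝ} (hr : 0 < r) {z : Euc n}
    (h : Metric.infDist z E ≤ n * r) : eta E r z = 1 := by
  refine sum_phi_eq_one r z _ fun j hj => ?_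
  rw [D.mem_JF hr]
  have h2 := near_dist hr hj
  have := infDist_le_add E (pt r j) z
  rw [norm_sub_rev] at this
  linarith

lemma WData.TT_nonneg (D : WData m n E P M) {r : ℝ} (hr : 0 < r) (z : Euc n) : 0 ≤ TT m E P M r z := by
  refine Finset.sum_nonneg fun j hj => ?_
  by_cases h : phi r j z = 0
  · rw [h, zero_mul]
  · refine mul_nonneg (phi_nonneg _ _ _) ?_
    have h1 := D.near_x hr hj (near_of_phi r j z h)
    have h2 := gamma_nonneg D.hm D.hn _ M D.hM _ (D.gam _ (D.nr_mem (pt r j))) z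
    refine h2.trans ?_
    unfold qf
    have := D.hM
    gcongr

lemma WData.HH_nonneg (D : WData m n E P M) (k : ℕ) (z : Euc n) : 0 ≤ HH m E P M k z := by
  induction k with
  | zero => exact D.TT_nonneg (rk_pos 0) z
  | succ k ih =>
    exact add_nonneg (mul_nonneg (sub_nonneg.2 (sum_phi_le_one _ _ _)) ih) (D.TT_nonneg (rk_pos _) z)

lemma WData.FF_nonneg (D : WData m n E P M) (z : Euc n) : 0 ≤ FF m E P M z := by
  unfold FF
  split_ifs with h1 h2
  · have := gamma_nonneg D.hm D.hn z M D.hM _ (D.gam z h1) z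
    simpa [D.hm.ne'] using this
  · exact D.HH_nonneg _ _
  · exact le_rfl

lemma qf_contDiff (r : ℝ) (j : Fin n → ℤ) : ContDiff ℝ (⊤ : ℕ∞) (qf m E P M r j) :=
  (contDiff_peval _ _).add contDiff_const

lemma eta_contDiff (r : ℝ) : ContDiff ℝ (⊤ : ℕ∞) (eta E r) :=
  ContDiff.sum fun j _ => phi_contDiff r j _

lemma TT_contDiff (r : ℝ) : ContDiff ℝ (⊤ : ℕ∞) (TT m E P M r) :=
  ContDiff.sum fun j _ => (phi_contDiff r j _).mul (qf_contDiff r j)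

lemma SS_contDiff (r : ℝ) (x : Euc n) : ContDiff ℝ (⊤ : ℕ∞) (SS m E P M r x) :=
  ContDiff.sum fun j _ => (phi_contDiff r j _).mul ((qf_contDiff r j).sub (contDiff_peval _ _))

lemma HH_contDiff (k : ℕ) : ContDiff ℝ (⊤ : ℕ∞) (HH m E P M k) := by
  induction k with
  | zero => exact TT_contDiff _
  | succ k ih =>
    exact ((contDiff_const.sub (eta_contDiff _)).mul ih).add (TT_contDiff _)

lemma SS_eq (r : ℝ) (x z : Euc n) : SS m E P M r x z = TT m E P M r z - eta E r z * peval (P x) z := by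
  simp only [SS, TT, eta, Finset.sum_mul, ← Finset.sum_sub_distrib, mul_sub]

lemma WData.HH_const (D : WData m n E P M) {K : ℕ} {z : Euc n}
    (h : 3 * n * rk (K+1) < Metric.infDist z E) {l : ℕ} (hl : K ≤ l) : HH m E P M l z = HH m E P M K z := by
  induction l, hl using Nat.le_induction with
  | base => rfl
  | succ l hl ih =>
    have h2 : 3 * n * rk (l+1) < Metric.infDist z E := by
      refine lt_of_le_of_lt ?_ h
      have := rk_anti (Nat.succ_le_succ hl)
      gcongr
    simp only [HH]
    rw [D.eta_zero (rk_pos _) h2, D.TT_zero (rk_pos _) h2, ih]; ring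

lemma WData.not_mem (_D : WData m n E P M) {z : Euc n} (h : 0 < Metric.infDist z E) : z ∉ E := by
  intro hz
  rw [Metric.infDist_zero_of_mem hz] at h
  exact lt_irrefl _ h

lemma WData.FF_eq (D : WData m n E P M) {K : ℕ} {z : Euc n}
    (h : 3 * n * rk (K+1) < Metric.infDist z E) : FF m E P M z = HH m E P M K z := by
  classical
  have hz : z ∉ E := D.not_mem (lt_of_le_of_lt (by have := rk_pos (K+1); positivity) h)
  have hex : ∃ K, 3 * n * rk (K+1) < Metric.infDist z E := ⟨K, h⟩
  unfold FF
  rw [if_neg hz, dif_pos hex]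
  exact (D.HH_const (Nat.find_spec hex) (Nat.find_min' hex h)).symm

lemma WData.HH_eq (D : WData m n E P M) {K : ℕ} {z : Euc n}
    (h : Metric.infDist z E ≤ n * rk K) : HH m E P M K z = TT m E P M (rk K) z := by
  cases K with
  | zero => rfl
  | succ K => simp only [HH]; rw [D.eta_one (rk_pos _) h]; ring

lemma WData.FF_local (D : WData m n E P M) {K : ℕ} {z : Euc n} (x : Euc n)
    (h : 3 * n * rk (K+2) < Metric.infDist z E) (h' : Metric.infDist z E ≤ n * rk K) :
    FF m E P M z - peval (P x) z = (1 + - eta E (rk (K+1)) z) * SS m E P M (rk K) x z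
      + SS m E P M (rk (K+1)) x z := by
  rw [D.FF_eq h, SS_eq, SS_eq, D.eta_one (rk_pos K) h']
  simp only [HH]
  rw [D.HH_eq h']; ring

end

section

variable {m n : ℕ} {E : Set (Euc n)} {P : Euc n → MPoly n} {M : ℝ}

def cA (m n : ℕ) : ℝ := ((1 + 4 * n) ^ m * ((n:ℝ) ^ m * (7 * n) ^ m)) + 2 ^ m * (n:ℝ) ^ m * (3 * n) ^ m
def cB (m n : ℕ) (B : ℝ) : ℝ := 3 ^ n * (2 ^ m * B)
def cD (m n : ℕ) (B : ℝ) : ℝ :=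
  2 ^ m * ((1 + cB m n B) * (cB m n B * cA m n * 4 ^ m)) + cB m n B * cA m n

lemma cA_nonneg (m n : ℕ) : 0 ≤ cA m n := by unfold cA; positivity
lemma cB_nonneg (m n : ℕ) {B : ℝ} (hB : 0 ≤ B) : 0 ≤ cB m n B := by unfold cB; positivity
lemma cD_nonneg (m n : ℕ) {B : ℝ} (hB : 0 ≤ B) : 0 ≤ cD m n B := by
  have := cA_nonneg m n; have := cB_nonneg m n hB; unfold cD; positivity

lemma WData.SS_Bd (D : WData m n E P M) {B : ℝ} (hB : ∀ i ≤ m, ∀ y : Euc n, ‖iteratedFDeriv ℝ i Phi y‖ ≤ B)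
    (hB0 : 0 ≤ B) {r : ℝ} (hr : 0 < r) {x z : Euc n} (hx : x ∈ E) (hz : ‖z - x‖ ≤ 4 * n * r) :
    Bd m (SS m E P M r x) z r (cB m n B * cA m n * (M * r ^ m)) := by
  have hM := D.hM
  have hn1 : (1:ℝ) ≤ n := by exact_mod_cast D.hn
  have hA := cA_nonneg m n
  have := S_Bd hB hB0 hr (JF E r) (fun j z => qf m E P M r j z - peval (P x) z)
    (fun j _ => (qf_contDiff r j).sub (contDiff_peval _ _)) z (cA m n * (M * r ^ m)) (by positivity) (by
      intro j hj hnear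
      have hxj := D.nr_mem (pt r j)
      have h1 := D.near_x hr hj hnear
      set y := nr E (pt r j) with hy
      have h2 : ‖x - y‖ ≤ 7 * n * r := by
        have := norm_sub_le_norm_sub_add_norm_sub x z y
        rw [norm_sub_rev x z] at this
        linarith
      have e : (fun z => qf m E P M r j z - peval (P x) z) = fun z => (- peval (P x - P y) z) +
          2 ^ m * (n:ℝ) ^ m * M * (3 * n * r) ^ m := by
        funext w; rw [peval_sub]; simp only [qf, ← hy]; ring
      rw [e]
      have hp := poly_bound (m := m) D.hn (P x - P y)
        ((MvPolynomial.totalDegree_sub _ _).trans (max_le (D.dg x hx) (D.dg y hxj))) D.hm x z r (4 * n)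
        (M * (7 * n) ^ m * r ^ m) hr (by positivity) (by positivity) (by
          intro β hβ
          have h3 := D.comp x hx y hxj β hβ
          have hm := D.hm
          calc _ ≤ (M * ‖x - y‖ ^ (m - deg β)) * r ^ deg β := by gcongr
            _ ≤ (M * (7 * n * r) ^ (m - deg β)) * r ^ deg β := by gcongr
            _ = M * (7 * n) ^ (m - deg β) * (r ^ (m - deg β) * r ^ deg β) := by rw [mul_pow]; ring
            _ = M * (7 * n) ^ (m - deg β) * r ^ m := by rw [← pow_add]; congr 2; omega
            _ ≤ _ := by
              gcongr
              · linarith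
              · omega) hz
      have hc : Bd m (fun _ : Euc n => 2 ^ m * (n:ℝ) ^ m * M * (3 * n * r) ^ m) z r
          ‖2 ^ m * (n:ℝ) ^ m * M * (3 * n * r) ^ m‖ := Bd.const
      refine (Bd.add hr.le (contDiff_peval _ _).neg contDiff_const hp.neg hc).mono hr.le le_rfl (le_of_eq ?_)
      rw [Real.norm_of_nonneg (by positivity)]
      unfold cA; rw [mul_pow (3 * (n:ℝ)) r]; ring)
  refine this.mono hr.le le_rfl (le_of_eq ?_)
  unfold cB; ring

lemma eta_Bd {B : ℝ} (hB : ∀ i ≤ m, ∀ y : Euc n, ‖iteratedFDeriv ℝ i Phi y‖ ≤ B)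
    (hB0 : 0 ≤ B) {r : ℝ} (hr : 0 < r) (z : Euc n) : Bd m (fun y => 1 + - eta E r y) z r (1 + cB m n B) := by
  have h1 := S_Bd hB hB0 hr (JF E r) (fun _ _ => 1) (fun j _ => contDiff_const) z 1 zero_le_one
    (fun j _ _ => by simpa using Bd.const (m := m) (c := (1:ℝ)) (z := z) (r := r))
  have e : (fun y : Euc n => ∑ j ∈ JF E r, phi r j y * 1) = eta E r := by funext y; simp [eta]
  rw [e] at h1
  have hc : Bd m (fun _ : Euc n => (1:ℝ)) z r 1 := by simpa using Bd.const (m := m) (c := (1:ℝ)) (z := z) (r := r)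
  refine (Bd.add hr.le contDiff_const (eta_contDiff _).neg hc h1.neg).mono hr.le le_rfl (le_of_eq ?_)
  unfold cB; ring

lemma isOpen_ann (a b : ℝ) : IsOpen {z : Euc n | a < Metric.infDist z E ∧ Metric.infDist z E < b} :=
  (isOpen_lt continuous_const (Metric.continuous_infDist_pt E)).inter
    (isOpen_lt (Metric.continuous_infDist_pt E) continuous_const)

lemma WData.main_local (D : WData m n E P M) {B : ℝ}
    (hB : ∀ i ≤ m, ∀ y : Euc n, ‖iteratedFDeriv ℝ i Phi y‖ ≤ B)
    (hB0 : 0 ≤ B) {K : ℕ} {x z : Euc n} (hx : x ∈ E) (hxz : ‖z - x‖ = Metric.infDist z E)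
    (h : 3 * n * rk (K+2) < Metric.infDist z E) (h' : Metric.infDist z E < n * rk K) :
    Bd m (fun y => FF m E P M y - peval (P x) y) z (rk (K+1)) (cD m n B * (M * rk (K+1) ^ m)) := by
  have hM := D.hM
  have hA := cA_nonneg m n
  have hBB := cB_nonneg m n hB0
  have hr := rk_pos (K+1)
  have hr' := rk_pos K
  have e4 : rk K = 4 * rk (K+1) := by rw [rk_succ]; ring
  have hev : (fun y => FF m E P M y - peval (P x) y) =ᶠ[nhds z]
      fun y => (1 + - eta E (rk (K+1)) y) * SS m E P M (rk K) x y + SS m E P M (rk (K+1)) x y := by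
    filter_upwards [(isOpen_ann _ _).mem_nhds ⟨h, h'⟩] with y hy
    exact D.FF_local x hy.1 hy.2.le
  have h1 := D.SS_Bd hB hB0 hr hx (z := z) (by rw [hxz]; rw [e4] at h'; linarith)
  have h2 := D.SS_Bd hB hB0 hr' hx (z := z) (by rw [hxz]; nlinarith [Nat.cast_nonneg (α := ℝ) n])
  have h2' := h2.mono hr.le (rk_anti (Nat.le_succ K)) le_rfl
  have h3 := eta_Bd (E := E) hB hB0 hr z
  have hsm : ContDiff ℝ (⊤ : ℕ∞) fun y => 1 + - eta E (rk (K+1)) y := contDiff_const.add (eta_contDiff _).neg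
  have h4 := Bd.add hr.le (hsm.mul (SS_contDiff (rk K) x)) (SS_contDiff (rk (K+1)) x)
    (Bd.mul hr.le hsm (SS_contDiff (rk K) x) h3 h2') h1
  intro i hi
  rw [(hev.iteratedFDeriv ℝ i).self_of_nhds]
  refine (h4 i hi).trans (le_of_eq ?_)
  rw [e4, mul_pow]; unfold cD; ring

/-- every point off `E` at distance `< n` lies in one of the annuli -/
lemma WData.exists_K (D : WData m n E P M) {z : Euc n} (h0 : 0 < Metric.infDist z E)
    (h : Metric.infDist z E < n) :
    ∃ K, 3 * n * rk (K+2) < Metric.infDist z E ∧ Metric.infDist z E < n * rk K := by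
  have hn : (0:ℝ) < n := by exact_mod_cast D.hn
  obtain ⟨K, h1, h2⟩ := exists_nat_pow_near_of_lt_one (x := Metric.infDist z E / n) (y := (1/4 : ℝ))
    (by positivity) (by rw [div_le_one hn]; exact h.le) (by norm_num) (by norm_num)
  rw [lt_div_iff₀ hn] at h1
  rw [div_le_iff₀ hn] at h2
  rcases h2.lt_or_eq with h2 | h2
  · refine ⟨K, ?_, by unfold rk; linarith⟩
    have : rk (K+2) = (1/4) ^ (K+1) / 4 := by unfold rk; ring
    rw [this]
    have : (0:ℝ) < (1/4)^(K+1) * n := by positivity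
    linarith
  · cases K with
    | zero => simp at h2; linarith
    | succ K =>
      refine ⟨K, ?_, ?_⟩
      · rw [h2]; unfold rk
        have : (0:ℝ) < (1/4)^(K+1) * n := by positivity
        rw [pow_succ]; linarith
      · rw [h2]; unfold rk
        have : (0:ℝ) < (1/4)^K * n := by positivity
        rw [pow_succ]; linarith

lemma WData.near_bound (D : WData m n E P M) {B : ℝ}
    (hB : ∀ i ≤ m, ∀ y : Euc n, ‖iteratedFDeriv ℝ i Phi y‖ ≤ B)
    (hB0 : 0 ≤ B) {x z : Euc n} (hx : x ∈ E) (hxz : ‖z - x‖ = Metric.infDist z E)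
    (h0 : 0 < Metric.infDist z E) (h : Metric.infDist z E < n) :
    ∀ i ≤ m, ‖iteratedFDeriv ℝ i (fun y => FF m E P M y - peval (P x) y) z‖ ≤
       (2 ^ m * cD m n B * M) * ‖z - x‖ ^ (m - i) ∧ 
      ‖iteratedFDeriv ℝ i (fun y => FF m E P M y - peval (P x) y) z‖ ≤ cD m n B * M := by
  have hM := D.hM
  have hn1 : (1:ℝ) ≤ n := by exact_mod_cast D.hn
  have hD := cD_nonneg m n hB0
  obtain ⟨K, h1, h2⟩ := D.exists_K h0 h
  intro i hi
  have h3 := D.main_local hB hB0 hx hxz h1 h2 i hi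
  have hr := rk_pos (K+1)
  have h4 : ‖iteratedFDeriv ℝ i (fun y => FF m E P M y - peval (P x) y) z‖ ≤
      cD m n B * M * rk (K+1) ^ (m - i) := by
    have e : rk (K+1) ^ m = rk (K+1) ^ (m - i) * rk (K+1) ^ i := by rw [← pow_add]; congr 1; omega
    rw [e] at h3
    refine le_of_mul_le_mul_right (h3.trans (le_of_eq ?_)) (pow_pos hr i)
    ring
  refine ⟨h4.trans ?_, h4.trans ?_⟩
  · have h5 : rk (K+1) ≤ 2 * ‖z - x‖ := by
      rw [hxz]
      have : rk (K+1) = 4 * rk (K+2) := by rw [rk_succ (K+1)]; ring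
      have hp := rk_pos (K+2)
      nlinarith
    calc _ ≤ cD m n B * M * (2 * ‖z - x‖) ^ (m - i) := by gcongr
      _ = cD m n B * M * (2 ^ (m-i) * ‖z - x‖ ^ (m - i)) := by rw [mul_pow]
      _ ≤ cD m n B * M * (2 ^ m * ‖z - x‖ ^ (m - i)) := by
        gcongr
        · norm_num
        · omega
      _ = _ := by ring
  · have := pow_le_one₀ (n := m - i) hr.le (rk_le_one (K+1))
    exact mul_le_of_le_one_right (by positivity) this

def cP (m n : ℕ) : ℝ := (1 + 4 * n) ^ m * (n:ℝ) ^ m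
def cQ (m n : ℕ) : ℝ := cP m n + 2 ^ m * (n:ℝ) ^ m * (3 * n) ^ m
def cF (m n : ℕ) (B : ℝ) : ℝ := cD m n B + cP m n + cB m n B * cQ m n

lemma cP_nonneg (m n : ℕ) : 0 ≤ cP m n := by unfold cP; positivity
lemma cQ_nonneg (m n : ℕ) : 0 ≤ cQ m n := by have := cP_nonneg m n; unfold cQ; positivity

lemma WData.peval_Bd (D : WData m n E P M) {x z : Euc n} (hx : x ∈ E) (hz : ‖z - x‖ ≤ 4 * n) :
    Bd m (peval (P x)) z 1 (cP m n * M) := by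
  have hM := D.hM
  refine (poly_bound (m := m) D.hn (P x) (D.dg x hx) D.hm x z 1 (4 * n) M one_pos (by positivity) hM.le
    (fun β hβ => by simpa using gamma_bound x M (P x) (D.gam x hx) β hβ) (by simpa using hz)).mono
    zero_le_one le_rfl (le_of_eq ?_)
  unfold cP; ring

lemma WData.off_contDiffAt (D : WData m n E P M) {z : Euc n} (hz : z ∉ E) :
    ContDiffAt ℝ (⊤ : ℕ∞) (FF m E P M) z := by
  have hn : (0:ℝ) < n := by exact_mod_cast D.hn
  have h0 : 0 < Metric.infDist z E := (D.fin.isClosed.notMem_iff_infDist_pos D.ne).1 hz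
  obtain ⟨K, hK⟩ := exists_pow_lt_of_lt_one (x := Metric.infDist z E / (3 * n)) (y := (1/4:ℝ))
    (by positivity) (by norm_num)
  have hK' : 3 * n * rk (K+1) < Metric.infDist z E := by
    rw [lt_div_iff₀ (by positivity)] at hK
    have := rk_anti (Nat.le_succ K)
    have e : rk K = (1/4)^K := rfl
    rw [← e] at hK
    nlinarith
  refine (HH_contDiff (m := m) (E := E) (P := P) (M := M) K).contDiffAt.congr_of_eventuallyEq ?_
  filter_upwards [(isOpen_lt continuous_const (Metric.continuous_infDist_pt E)).mem_nhds hK'] with y hy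
  exact D.FF_eq hy

lemma WData.off_bound (D : WData m n E P M) {B : ℝ}
    (hB : ∀ i ≤ m, ∀ y : Euc n, ‖iteratedFDeriv ℝ i Phi y‖ ≤ B)
    (hB0 : 0 ≤ B) {z : Euc n} (hz : z ∉ E) :
    ∀ i ≤ m, ‖iteratedFDeriv ℝ i (FF m E P M) z‖ ≤ cF m n B * M := by
  intro i hi
  have hM := D.hM
  have hn : (1:ℝ) ≤ n := by exact_mod_cast D.hn
  have h0 : 0 < Metric.infDist z E := (D.fin.isClosed.notMem_iff_infDist_pos D.ne).1 hz
  have hD := cD_nonneg m n hB0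
  have hP := cP_nonneg m n
  have hQ := cQ_nonneg m n
  have hBB := cB_nonneg m n hB0
  by_cases h : Metric.infDist z E < n
  · have hx := D.nr_mem z
    have hd := D.nr_dist z
    set x := nr E z
    have h1 := (D.near_bound hB hB0 hx hd h0 h i hi).2
    have h2 := D.peval_Bd hx (z := z) (by rw [hd]; linarith) i hi
    have e : iteratedFDeriv ℝ i (fun y => FF m E P M y - peval (P x) y) z =
        iteratedFDeriv ℝ i (FF m E P M) z - iteratedFDeriv ℝ i (peval (P x)) z :=
      iteratedFDeriv_sub_apply ((D.off_contDiffAt hz).of_le (by exact_mod_cast le_top)) (contDiff_peval _ _).contDiffAt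
    rw [e] at h1
    have h3 := norm_le_norm_sub_add (iteratedFDeriv ℝ i (FF m E P M) z) (iteratedFDeriv ℝ i (peval (P x)) z)
    simp only [one_pow, mul_one] at h2
    have : 0 ≤ cB m n B * cQ m n * M := by positivity
    unfold cF
    linarith
  · push Not at h
    have hK : 3 * n * rk (0 + 1) < Metric.infDist z E := by
      rw [rk_succ]; simp [rk]; linarith
    have hev : FF m E P M =ᶠ[nhds z] TT m E P M 1 := by
      filter_upwards [(isOpen_lt continuous_const (Metric.continuous_infDist_pt E)).mem_nhds hK] with y hy
      rw [D.FF_eq hy]; simp [HH, rk]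
    have h1 := S_Bd hB hB0 one_pos (JF E 1) (fun j z => qf m E P M 1 j z)
      (fun j _ => qf_contDiff 1 j) z (cQ m n * M) (by positivity) (by
        intro j hj hnear
        have h1 := D.near_x one_pos hj hnear
        have h2 := D.peval_Bd (D.nr_mem (pt 1 j)) (z := z) (by linarith)
        refine (Bd.add zero_le_one (contDiff_peval _ _) contDiff_const h2 Bd.const).mono zero_le_one le_rfl
          (le_of_eq ?_)
        rw [Real.norm_of_nonneg (by positivity)]
        unfold cQ; ring) i hi
    rw [(hev.iteratedFDeriv ℝ i).self_of_nhds]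
    have e : TT m E P M 1 = fun z => ∑ j ∈ JF E 1, phi 1 j z * qf m E P M 1 j z := rfl
    rw [e]
    simp only [one_pow, mul_one] at h1
    refine h1.trans ?_
    have : 3 ^ n * (2 ^ m * (B * (cQ m n * M))) = cB m n B * cQ m n * M := by unfold cB; ring
    rw [this]
    have : 0 ≤ cD m n B * M := by positivity
    have : 0 ≤ cP m n * M := by positivity
    unfold cF
    linarith

lemma WData.at_E (D : WData m n E P M) {B : ℝ}
    (hB : ∀ i ≤ m, ∀ y : Euc n, ‖iteratedFDeriv ℝ i Phi y‖ ≤ B)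
    (hB0 : 0 ≤ B) {x : Euc n} (hx : x ∈ E) :
    ContDiffAt ℝ ((m - 1 : ℕ) : ℕ∞) (FF m E P M) x ∧
      ∀ i ≤ m - 1, iteratedFDeriv ℝ i (FF m E P M) x = iteratedFDeriv ℝ i (peval (P x)) x := by
  have hM := D.hM
  have hm := D.hm
  have hn : (1:ℝ) ≤ n := by exact_mod_cast D.hn
  -- near `x`, `x` is the nearest point
  have hfar : ∃ ρ > 0, ∀ y ∈ E, y ≠ x → ρ ≤ ‖y - x‖ := by
    have hfin : (E \ {x}).Finite := D.fin.subset Set.diff_subset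
    have hopen : (E \ {x})ᶜ ∈ nhds x := hfin.isClosed.isOpen_compl.mem_nhds (by simp)
    obtain ⟨ρ, hρ, hb⟩ := Metric.mem_nhds_iff.1 hopen
    refine ⟨ρ, hρ, fun y hy hyx => ?_⟩
    by_contra hc
    exact hb (by rw [mem_ball_iff_norm]; linarith : y ∈ Metric.ball x ρ) ⟨hy, hyx⟩
  obtain ⟨ρ, hρ, hfar⟩ := hfar
  have hev : ∀ᶠ z in nhds x, z ≠ x → z ∉ E ∧ ‖z - x‖ = Metric.infDist z E ∧ Metric.infDist z E < n := by
    have hpos : 0 < min (ρ / 2) (n:ℝ) := by positivity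
    filter_upwards [Metric.ball_mem_nhds x hpos] with z hz hzx
    rw [mem_ball_iff_norm, lt_min_iff] at hz
    have h1 : ‖z - x‖ = Metric.infDist z E := by
      have hd := D.nr_dist z
      have hmem := D.nr_mem z
      have : nr E z = x := by
        by_contra hne
        have h2 := hfar _ hmem hne
        have h3 : ‖z - nr E z‖ ≤ ‖z - x‖ := by
          rw [hd, ← dist_eq_norm]; exact Metric.infDist_le_dist_of_mem hx
        have h4 := norm_sub_le_norm_sub_add_norm_sub (nr E z) z x
        rw [norm_sub_rev (nr E z) z] at h4
        linarith [hz.1]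
      rw [← hd, this]
    refine ⟨D.not_mem ?_, h1, h1 ▸ hz.2⟩
    rw [← h1, norm_pos_iff, sub_ne_zero]; exact hzx
  have hrem := removal (m - 1) ℝ (fun y => FF m E P M y - peval (P x) y) x (2 ^ m * cD m n B * M)
    (by simp [FF, hx])
    (by
      filter_upwards [hev] with z hz hzx
      exact ((D.off_contDiffAt (hz hzx).1).of_le (by exact_mod_cast le_top)).sub (contDiff_peval _ _).contDiffAt)
    (by
      filter_upwards [hev] with z hz hzx i hi
      obtain ⟨h1, h2, h3⟩ := hz hzx
      have h0 : 0 < Metric.infDist z E := (D.fin.isClosed.notMem_iff_infDist_pos D.ne).1 h1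
      have := (D.near_bound hB hB0 hx h2 h0 h3 i (by omega)).1
      rwa [show m - 1 + 1 - i = m - i by omega])
  have e : FF m E P M = fun y => (FF m E P M y - peval (P x) y) + peval (P x) y := by funext y; ring
  have hc : ContDiffAt ℝ ((m - 1 : ℕ) : ℕ∞) (FF m E P M) x := by
    rw [e]; exact hrem.1.add (contDiff_peval _ _).contDiffAt
  refine ⟨hc, fun i hi => ?_⟩
  have h1 := hrem.2 i hi
  have e2 : iteratedFDeriv ℝ i (fun y => FF m E P M y - peval (P x) y) x =
        iteratedFDeriv ℝ i (FF m E P M) x - iteratedFDeriv ℝ i (peval (P x)) x :=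
    iteratedFDeriv_sub_apply (hc.of_le (by exact_mod_cast hi)) (contDiff_peval _ _).contDiffAt
  rw [e2, sub_eq_zero] at h1
  exact h1

end

/-- **Lemma 4.2**: Whitney extension keeping nonnegativity, `C^{m-1,1}` version. -/
theorem whitney_extension_nonneg_Cm11 (m n : ℕ) (hm : 0 < m) (hn : 0 < n) :
    ∃ C : ℝ, 0 < C ∧
      ∀ (E : Set (Euc n)), E.Finite → ∀ P : Euc n → MPoly n, ∀ M : ℝ, 0 < M →
        (∀ x ∈ E, MvPolynomial.totalDegree (P x) ≤ m - 1) →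
        (∀ x ∈ E, P x ∈ GammaStar' m n x M) →
        (∀ x ∈ E, ∀ y ∈ E, ∀ β : Fin n → ℕ, deg β ≤ m - 1 →
          |mD β (peval (P x - P y)) x| ≤ M * ‖x - y‖ ^ (m - deg β)) →
        ∃ F : Euc n → ℝ, CmLipNormLe m n F (C * M) ∧ (∀ y, 0 ≤ F y) ∧
          ∀ x ∈ E, IsJetAt m n F x (P x) := by
  obtain ⟨B, hB0, hB⟩ := Phi_bound n m
  have hD := cD_nonneg m n hB0
  have hP := cP_nonneg m n
  have hQ := cQ_nonneg m n
  have hBB := cB_nonneg m n hB0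
  have hF0 : 0 ≤ cF m n B := by unfold cF; positivity
  refine ⟨cF m n B + 1, by linarith, ?_⟩
  intro E hE P M hM h1 h2 h3
  rcases E.eq_empty_or_nonempty with rfl | hne
  · refine ⟨fun _ => 0, ?_, fun _ => le_rfl, by simp⟩
    have hz : ∀ (α : Fin n → ℕ) (y : Euc n), mD α (fun _ : Euc n => (0:ℝ)) y = 0 := by
      intro α y
      have := abs_mD_le α (fun _ : Euc n => (0:ℝ)) contDiff_const y
      have e : iteratedFDeriv ℝ (deg α) (fun _ : Euc n => (0:ℝ)) y = 0 := by simp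
      rw [e, norm_zero] at this
      exact abs_eq_zero.1 (le_antisymm this (abs_nonneg _))
    refine ⟨contDiff_const, ?_, ?_⟩
    · intro α _ y; rw [hz]; simp; positivity
    · intro α _ i y t; rw [hz, hz]; simp; positivity
  have D : WData m n E P M := ⟨hm, hn, hE, hne, hM, h1, h2, h3⟩
  have hFc : ContDiff ℝ ((m - 1 : ℕ) : ℕ∞) (FF m E P M) := by
    rw [contDiff_iff_contDiffAt]
    intro z
    by_cases hz : z ∈ E
    · exact (D.at_E hB hB0 hz).1
    · exact (D.off_contDiffAt hz).of_le (by exact_mod_cast le_top)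
  have hcα : ∀ α : Fin n → ℕ, deg α ≤ m - 1 → ContDiff ℝ (deg α : ℕ∞) (FF m E P M) :=
    fun α hα => hFc.of_le (by exact_mod_cast hα)
  have hPF : cP m n * M ≤ cF m n B * M := by
    have : 0 ≤ cB m n B * cQ m n := by positivity
    gcongr; unfold cF; linarith
  have hbd : ∀ i ≤ m - 1, ∀ z, ‖iteratedFDeriv ℝ i (FF m E P M) z‖ ≤ cF m n B * M := by
    intro i hi z
    by_cases hz : z ∈ E
    · rw [(D.at_E hB hB0 hz).2 i hi]
      have := D.peval_Bd hz (z := z) (by simp) i (by omega)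
      simp only [one_pow, mul_one] at this
      exact this.trans hPF
    · exact D.off_bound hB hB0 hz i (by omega)
  refine ⟨FF m E P M, ⟨hFc, ?_, ?_⟩, D.FF_nonneg, ?_⟩
  · intro α hα z
    refine (abs_mD_le α _ (hcα α hα) z).trans ((hbd _ hα z).trans ?_)
    gcongr; linarith
  · intro α hα i z t
    set e : Euc n := EuclideanSpace.single i (1 : ℝ) with he
    have hen : ‖e‖ = 1 := by simp [he]
    have hlen : (mList α).length = m - 1 := by rw [mList_length, hα]
    have hmD : mD α (FF m E P M) = fun w => iteratedFDeriv ℝ (mList α).length (FF m E P M) w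
        (fun j => EuclideanSpace.single ((mList α).get j) (1:ℝ)) :=
      funext fun w => mD_apply α _ (hcα α hα.le) w
    have hcont : Continuous (mD α (FF m E P M)) := by
      rw [mD_eq_foldr]
      have := contDiff_foldr_pD (mList α) 0 (FF m E P M) (by rw [hlen]; simpa using hFc)
      exact this.continuous
    have hline : ∀ u : ℝ, HasDerivAt (fun t : ℝ => z + t • e) e u := fun u => by
      simpa using ((hasDerivAt_id u).smul_const e).const_add z
    have hlin : Continuous (fun t : ℝ => z + t • e) := by fun_prop
    have key := lip_off_countable (fun t => mD α (FF m E P M) (z + t • e)) ((fun t : ℝ => z + t • e) ⁻¹' E)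
      (by
        refine (hE.preimage ?_).countable
        intro a _ b _ hab
        have h4 : a • e = b • e := by simpa using hab
        have h5 : e ≠ 0 := by intro h; rw [h] at hen; simp at hen
        exact smul_left_injective ℝ h5 h4)
      (hcont.comp hlin) (cF m n B * M) (by positivity)
      (by
        intro u hu
        have hu' : z + u • e ∉ E := hu
        have hd : DifferentiableAt ℝ (iteratedFDeriv ℝ (mList α).length (FF m E P M)) (z + u • e) :=
          (D.off_contDiffAt hu').differentiableAt_iteratedFDeriv (by exact_mod_cast ENat.coe_lt_top _)
        have hda : HasFDerivAt (mD α (FF m E P M))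
            ((ContinuousMultilinearMap.apply ℝ (fun _ : Fin (mList α).length => Euc n) ℝ
              (fun j => EuclideanSpace.single ((mList α).get j) (1:ℝ))).comp
              (fderiv ℝ (iteratedFDeriv ℝ (mList α).length (FF m E P M)) (z + u • e))) (z + u • e) := by
          rw [hmD]
          exact (ContinuousMultilinearMap.apply ℝ (fun _ : Fin (mList α).length => Euc n) ℝ
              (fun j => EuclideanSpace.single ((mList α).get j) (1:ℝ))).hasFDerivAt.comp _ hd.hasFDerivAt
        have hder := hda.comp_hasDerivAt u (hline u)
        refine ⟨hder.differentiableAt, ?_⟩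
        have hd2 := hder.deriv
        change |deriv (mD α (FF m E P M) ∘ fun t => z + t • e) u| ≤ _
        rw [hd2]
        simp only [ContinuousLinearMap.comp_apply, ContinuousMultilinearMap.apply_apply]
        rw [← Real.norm_eq_abs]
        refine (ContinuousMultilinearMap.le_opNorm _ _).trans ?_
        simp only [EuclideanSpace.norm_single, norm_one, Finset.prod_const_one, mul_one]
        refine (ContinuousLinearMap.le_opNorm _ _).trans ?_
        rw [hen, mul_one, norm_fderiv_iteratedFDeriv]
        exact D.off_bound hB hB0 hu' _ (by rw [hlen]; omega))
      0 t
    simp only [zero_smul, add_zero, sub_zero] at key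
    refine key.trans ?_
    gcongr; linarith
  · intro x hx
    refine ⟨h1 x hx, fun α hα => ?_⟩
    rw [mD_apply α _ (contDiff_peval _ _), mD_apply α _ (hcα α hα),
      (D.at_E hB hB0 hx).2 _ (by rw [mList_length]; exact hα)]

end
end

section
/- There exist constants c₀ ∈ (0,1) and C, depending only on m and n, such that the following holds. Let 0 < δ ≤ 1, let x ∈ ℝⁿ, and let Q₁, Q₂ be polynomials of degree at most m−1 satisfying |∂^β Q_i(x)| ≤ δ^{−|β|} for all |β| ≤ m−1 and i = 1, 2, Q₁ ⊙_x Q₁ + Q₂ ⊙_x Q₂ = 1, and Q₁(x) ≥ 1/√2. Then there exist functions θ₁, θ₂ ∈ C^m(ℝⁿ) such that: |∂^β θ_i| ≤ Cδ^{−|β|} on ℝⁿ for |β| ≤ m and i = 1, 2; θ₁² + θ₂² = 1 on ℝⁿ; J_x(θ_i) = Q_i for i = 1, 2; and outside the open ball B(x, c₀δ) one has θ₁ = 1 and θ₂ = 0. -/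
open scoped BigOperators

noncomputable section

namespace ThetaAux

open scoped ContDiff Topology
open Filter

variable {n : ℕ}

/-- The standard basis vector. -/
def bv (i : Fin n) : Euc n := EuclideanSpace.single i (1 : ℝ)

def lD (l : List (Fin n)) (F : Euc n → ℝ) : Euc n → ℝ := l.foldr pD F

def idxList (α : Fin n → ℕ) : List (Fin n) :=
  (List.finRange n).flatMap fun i => List.replicate (α i) i

lemma mD_eq (α : Fin n → ℕ) (F : Euc n → ℝ) : mD α F = lD (idxList α) F := rfl

lemma idxList_length (α : Fin n → ℕ) : (idxList α).length = deg α := by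
  simp [idxList, deg, List.length_flatMap, List.sum_ofFn, ← List.ofFn_eq_map]

lemma lD_eq_iterated (l : List (Fin n)) (F : Euc n → ℝ) (hF : ContDiff ℝ ∞ F) :
    lD l F = fun y => iteratedFDeriv ℝ l.length F y (fun j => bv (l.get j)) := by
  induction l with
  | nil => funext y; simp [lD]
  | cons i l ih =>
    funext y
    change pD i (lD l F) y = _
    rw [ih]
    have hd : DifferentiableAt ℝ (iteratedFDeriv ℝ l.length F) y :=
      (hF.differentiable_iteratedFDeriv (by exact_mod_cast WithTop.coe_lt_top _)) y
    unfold pD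
    simp only [List.length_cons]
    rw [iteratedFDeriv_succ_apply_left]
    have := (hd.hasFDerivAt.continuousMultilinear_apply_const (fun j => bv (l.get j))).fderiv
    rw [this]
    rfl

lemma abs_lD_le (l : List (Fin n)) (F : Euc n → ℝ) (hF : ContDiff ℝ ∞ F) (y : Euc n) :
    |lD l F y| ≤ ‖iteratedFDeriv ℝ l.length F y‖ := by
  rw [lD_eq_iterated l F hF]
  refine ((iteratedFDeriv ℝ l.length F y).le_opNorm _).trans ?_
  simp [bv]

/-- coordinate functional -/
def prj (i : Fin n) : Euc n →L[ℝ] ℝ := EuclideanSpace.proj i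

lemma pD_scale (i : Fin n) (F : Euc n → ℝ) (c : ℝ) (x : Euc n) (hF : Differentiable ℝ F) (a : ℝ) :
    pD i (fun y => a * F (c • (y - x))) = fun y => (c * a) * pD i F (c • (y - x)) := by
  funext y
  unfold pD
  have h1 : HasFDerivAt (fun y : Euc n => c • (y - x)) (c • ContinuousLinearMap.id ℝ (Euc n)) y :=
    ((hasFDerivAt_id y).sub_const x).const_smul c
  have h2 := ((hF (c • (y - x))).hasFDerivAt.comp y h1).const_mul a
  have h3 := h2.fderiv
  simp only [Function.comp_def] at h3
  rw [h3]
  simp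
  ring

lemma contDiff_pD (i : Fin n) (F : Euc n → ℝ) (hF : ContDiff ℝ ∞ F) : ContDiff ℝ ∞ (pD i F) := by
  unfold pD
  exact (hF.fderiv_right (by simp)).clm_apply contDiff_const

lemma contDiff_lD (l : List (Fin n)) (F : Euc n → ℝ) (hF : ContDiff ℝ ∞ F) :
    ContDiff ℝ ∞ (lD l F) := by
  induction l with
  | nil => exact hF
  | cons i l ih => exact contDiff_pD i _ ih

lemma lD_scale (l : List (Fin n)) (F : Euc n → ℝ) (c : ℝ) (x : Euc n) (hF : ContDiff ℝ ∞ F) :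
    lD l (fun y => F (c • (y - x))) = fun y => c ^ l.length * lD l F (c • (y - x)) := by
  induction l with
  | nil => funext y; simp [lD]
  | cons i l ih =>
    change pD i (lD l _) = _
    rw [ih, pD_scale i (lD l F) c x ((contDiff_lD l F hF).differentiable (by simp))]
    funext y
    rw [List.length_cons, pow_succ']
    rfl

lemma lD_congr (l : List (Fin n)) {F G : Euc n → ℝ} {x : Euc n} (h : F =ᶠ[𝓝 x] G) :
    lD l F =ᶠ[𝓝 x] lD l G := by
  induction l with
  | nil => exact h
  | cons i l ih =>
    change pD i (lD l F) =ᶠ[𝓝 x] pD i (lD l G)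
    filter_upwards [ih.fderiv (𝕜 := ℝ)] with y hy
    unfold pD
    rw [hy]

/-! polynomials -/

lemma contDiff_coord (i : Fin n) : ContDiff ℝ ∞ (fun y : Euc n => y i) :=
  (prj i).contDiff

lemma contDiff_peval (P : MPoly n) : ContDiff ℝ ∞ (peval P) := by
  unfold peval
  induction P using MvPolynomial.induction_on with
  | C a => simp only [MvPolynomial.eval_C]; exact contDiff_const
  | add p q hp hq => simpa using hp.add hq
  | mul_X p i hp => simpa using hp.mul (contDiff_coord i)

lemma pD_coord (i j : Fin n) (y : Euc n) :
    fderiv ℝ (fun y : Euc n => y j) y (EuclideanSpace.single i (1:ℝ)) = if j = i then 1 else 0 := by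
  have h' : (fun y : Euc n => y j) = ⇑(prj j) := rfl
  rw [h', ContinuousLinearMap.fderiv]
  simp [prj]

lemma pD_peval (i : Fin n) (P : MPoly n) : pD i (peval P) = peval (MvPolynomial.pderiv i P) := by
  induction P using MvPolynomial.induction_on with
  | C a =>
    funext y
    have : peval (MvPolynomial.C a : MPoly n) = fun _ => a := by funext z; simp [peval]
    rw [this]; simp [pD, peval]
  | add p q hp hq =>
    have : peval (p + q) = fun y => peval p y + peval q y := by funext z; simp [peval]
    funext y
    have hp' := congrFun hp y
    have hq' := congrFun hq y
    unfold pD at hp' hq' ⊢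
    rw [this, fderiv_fun_add ((contDiff_peval p).differentiable (by simp) y)
      ((contDiff_peval q).differentiable (by simp) y)]
    simp only [add_apply, hp', hq', map_add]
    simp [peval]
  | mul_X p j hp =>
    have : peval (p * MvPolynomial.X j) = fun y => peval p y * y j := by funext z; simp [peval]
    funext y
    have hp' := congrFun hp y
    unfold pD at hp' ⊢
    rw [this, fderiv_fun_mul ((contDiff_peval p).differentiable (by simp) y)
      ((contDiff_coord j).differentiable (by simp) y)]
    simp only [add_apply, smul_apply, hp', pD_coord,
      MvPolynomial.pderiv_mul, MvPolynomial.pderiv_X]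
    by_cases hij : j = i
    · subst hij; simp [peval]; ring
    · simp [peval, hij]; ring

lemma lD_peval (l : List (Fin n)) (P : MPoly n) :
    lD l (peval P) = peval (l.foldr (fun i => MvPolynomial.pderiv i) P) := by
  induction l with
  | nil => rfl
  | cons i l ih =>
    change pD i (lD l _) = _
    rw [ih, pD_peval]; rfl

/-- multi-index of a list -/
def cnt (l : List (Fin n)) : Fin n →₀ ℕ := (l.map fun i => Finsupp.single i 1).sum

lemma abs_coeff_le (l : List (Fin n)) (P : MPoly n) (s : Fin n →₀ ℕ) :
    |MvPolynomial.coeff (s + cnt l) P| ≤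
      |MvPolynomial.coeff s (l.foldr (fun i => MvPolynomial.pderiv i) P)| := by
  induction l generalizing s with
  | nil => simp [cnt]
  | cons i l ih =>
    simp only [List.foldr_cons, MvPolynomial.coeff_pderiv]
    have := ih (s + Finsupp.single i 1)
    have e : s + cnt (i :: l) = s + Finsupp.single i 1 + cnt l := by simp [cnt, add_assoc]
    rw [e]
    refine this.trans ?_
    rw [abs_mul]
    refine le_mul_of_one_le_right (abs_nonneg _) ?_
    rw [abs_of_nonneg (by positivity)]
    have : (0:ℝ) ≤ s i := by positivity
    linarith

lemma cnt_idxList (s : Fin n →₀ ℕ) : cnt (idxList (⇑s)) = s := by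
  unfold cnt idxList
  have key : ∀ L : List (Fin n),
      ((L.flatMap fun i => List.replicate (s i) i).map fun i => Finsupp.single i 1).sum
        = (L.map fun i => s i • (Finsupp.single i 1 : Fin n →₀ ℕ)).sum := by
    intro L
    induction L with
    | nil => rfl
    | cons a L ih => simp only [List.flatMap_cons, List.map_append, List.sum_append, ih]; simp
  rw [key]
  rw [← List.ofFn_eq_map, List.sum_ofFn]
  ext j
  simp

lemma coeff_le_mD (P : MPoly n) (s : Fin n →₀ ℕ) :
    |MvPolynomial.coeff s P| ≤ |mD (⇑s) (peval P) 0| := by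
  have := abs_coeff_le (idxList ⇑s) P 0
  rw [cnt_idxList, zero_add] at this
  rw [mD_eq, lD_peval]
  refine this.trans_eq ?_
  congr 1
  have : (fun i => (0 : Euc n) i) = 0 := by funext; simp
  rw [peval, this, MvPolynomial.eval_zero]
  rfl

/-! flat functions -/

/-- `F` is smooth at `x` and vanishes to order `k`. -/
def Flat (x : Euc n) : ℕ → (Euc n → ℝ) → Prop
  | 0, F => ContDiffAt ℝ ∞ F x
  | k + 1, F => ContDiffAt ℝ ∞ F x ∧ F x = 0 ∧ ∀ i, Flat x k (pD i F)

lemma Flat.smooth {x : Euc n} {k : ℕ} {F : Euc n → ℝ} (h : Flat x k F) : ContDiffAt ℝ ∞ F x := by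
  cases k with
  | zero => exact h
  | succ k => exact h.1

lemma contDiffAt_pD {x : Euc n} {F : Euc n → ℝ} (h : ContDiffAt ℝ ∞ F x) (i : Fin n) :
    ContDiffAt ℝ ∞ (pD i F) x := by
  unfold pD
  exact (h.fderiv_right (by simp)).clm_apply contDiffAt_const

lemma ev_diff {x : Euc n} {F : Euc n → ℝ} (h : ContDiffAt ℝ ∞ F x) :
    ∀ᶠ y in 𝓝 x, DifferentiableAt ℝ F y := by
  have h1 : ContDiffAt ℝ 1 F x := h.of_le (by exact_mod_cast le_top)
  filter_upwards [h1.eventually (by simp)] with y hy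
  exact hy.differentiableAt (by simp)

lemma Flat.pD {x : Euc n} {k : ℕ} {F : Euc n → ℝ} (h : Flat x k F) (i : Fin n) :
    Flat x (k - 1) (pD i F) := by
  cases k with
  | zero => exact contDiffAt_pD h i
  | succ k => exact h.2.2 i

lemma pD_congr {x : Euc n} {F G : Euc n → ℝ} (h : F =ᶠ[𝓝 x] G) (i : Fin n) :
    _root_.pD i F =ᶠ[𝓝 x] _root_.pD i G := lD_congr [i] h

lemma Flat.congr {x : Euc n} {k : ℕ} {F G : Euc n → ℝ} (h : Flat x k F) (e : G =ᶠ[𝓝 x] F) :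
    Flat x k G := by
  induction k generalizing F G with
  | zero => exact ContDiffAt.congr_of_eventuallyEq h e
  | succ k ih =>
    exact ⟨h.1.congr_of_eventuallyEq e, e.eq_of_nhds.trans h.2.1,
      fun i => ih (h.2.2 i) (pD_congr e i)⟩

lemma Flat.pred {x : Euc n} {k : ℕ} {F : Euc n → ℝ} (h : Flat x (k + 1) F) : Flat x k F := by
  induction k generalizing F with
  | zero => exact h.1
  | succ k ih => exact ⟨h.1, h.2.1, fun i => ih (h.2.2 i)⟩

lemma Flat.mono {x : Euc n} {k j : ℕ} {F : Euc n → ℝ} (h : Flat x k F) (hj : j ≤ k) :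
    Flat x j F := by
  induction k, hj using Nat.le_induction with
  | base => exact h
  | succ k _ ih => exact ih h.pred

lemma Flat.add {x : Euc n} {k : ℕ} {F G : Euc n → ℝ} (hF : Flat x k F) (hG : Flat x k G) :
    Flat x k (fun y => F y + G y) := by
  induction k generalizing F G with
  | zero => exact ContDiffAt.add hF hG
  | succ k ih =>
    refine ⟨hF.1.add hG.1, by simp [hF.2.1, hG.2.1], fun i => ?_⟩
    refine (ih (hF.2.2 i) (hG.2.2 i)).congr ?_
    filter_upwards [ev_diff hF.1, ev_diff hG.1] with y h1 h2
    simp [_root_.pD, fderiv_fun_add h1 h2]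

lemma Flat.zero (x : Euc n) (k : ℕ) : Flat x k (fun _ => 0) := by
  induction k with
  | zero => exact contDiffAt_const
  | succ k ih =>
    refine ⟨contDiffAt_const, rfl, fun i => ih.congr ?_⟩
    refine Filter.Eventually.of_forall fun y => ?_
    simp [_root_.pD]

lemma Flat.mul {x : Euc n} {a b : ℕ} {F G : Euc n → ℝ} (hF : Flat x a F) (hG : Flat x b G) :
    Flat x (a + b) (fun y => F y * G y) := by
  induction hN : a + b generalizing a b F G with
  | zero => exact hF.smooth.mul hG.smooth
  | succ N ih =>
    refine ⟨hF.smooth.mul hG.smooth, ?_, fun i => ?_⟩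
    · rcases Nat.eq_zero_or_pos a with ha | ha
      · have hb : b = N + 1 := by omega
        subst hb
        simp [hG.2.1]
      · obtain ⟨a', rfl⟩ : ∃ a', a = a' + 1 := ⟨a - 1, by omega⟩
        simp [hF.2.1]
    · have h1 : Flat x N (fun y => F y * _root_.pD i G y) := by
        rcases Nat.eq_zero_or_pos b with hb | hb
        · exact ih (hF.mono (Nat.sub_le a 1)) (hG.pD i) (by omega)
        · exact ih hF (hG.pD i) (by omega)
      have h2 : Flat x N (fun y => G y * _root_.pD i F y) := by
        rcases Nat.eq_zero_or_pos a with hb | hb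
        · exact ih (hG.mono (Nat.sub_le b 1)) (hF.pD i) (by omega)
        · exact ih hG (hF.pD i) (by omega)
      refine (h1.add h2).congr ?_
      filter_upwards [ev_diff hF.smooth, ev_diff hG.smooth] with y h1 h2
      simp [_root_.pD, fderiv_fun_mul h1 h2]

lemma Flat.sum {ι : Type*} {x : Euc n} {k : ℕ} (t : Finset ι) (F : ι → Euc n → ℝ)
    (h : ∀ j ∈ t, Flat x k (F j)) : Flat x k (fun y => ∑ j ∈ t, F j y) := by
  classical
  induction t using Finset.induction_on with
  | empty => simpa using Flat.zero x k
  | insert a t ha ih =>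
    simp only [Finset.sum_insert ha]
    exact (h a (by simp)).add (ih fun j hj => h j (by simp [hj]))

lemma Flat.coord (x : Euc n) (i : Fin n) : Flat x 1 (fun y => y i - x i) :=
  ⟨((contDiff_coord i).sub contDiff_const).contDiffAt, by simp, fun j =>
    contDiffAt_pD ((contDiff_coord i).sub contDiff_const).contDiffAt j⟩

lemma Flat.coord_pow (x : Euc n) (i : Fin n) (k : ℕ) : Flat x k (fun y => (y i - x i) ^ k) := by
  induction k with
  | zero => simpa [Flat] using contDiffAt_const
  | succ k ih => simpa only [pow_succ] using ih.mul (Flat.coord x i)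

lemma Flat.prod (x : Euc n) (s : Fin n → ℕ) (t : Finset (Fin n)) :
    Flat x (∑ i ∈ t, s i) (fun y => ∏ i ∈ t, (y i - x i) ^ s i) := by
  classical
  induction t using Finset.induction_on with
  | empty => simpa [Flat] using contDiffAt_const
  | insert a t ha ih =>
    simp only [Finset.sum_insert ha, Finset.prod_insert ha]
    exact (Flat.coord_pow x a (s a)).mul ih

lemma flat_peval (x : Euc n) (m : ℕ) (P : MPoly n)
    (h : ∀ s : Fin n →₀ ℕ, ∑ i, s i < m → MvPolynomial.coeff s P = 0) :
    Flat x m (fun y => peval P (y - x)) := by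
  simp only [peval, MvPolynomial.eval_eq']
  refine Flat.sum _ _ fun s _ => ?_
  by_cases hs : ∑ i, s i < m
  · simpa [h s hs] using Flat.zero x m
  · have h0 : Flat x 0 (fun _ : Euc n => MvPolynomial.coeff s P) := contDiffAt_const
    exact (h0.mul (Flat.prod x s Finset.univ)).mono (by omega)

lemma lD_eq_of_flat {x : Euc n} {k : ℕ} {F G : Euc n → ℝ} (l : List (Fin n))
    (hF : ContDiffAt ℝ ∞ F x) (hG : ContDiffAt ℝ ∞ G x)
    (h : Flat x k (fun y => F y - G y)) (hl : l.length < k) : lD l F x = lD l G x := by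
  induction l using List.reverseRecOn generalizing F G k with
  | nil =>
    obtain ⟨k', rfl⟩ : ∃ k', k = k' + 1 := ⟨k - 1, by simp at hl; omega⟩
    have := h.2.1
    simp only [lD, List.foldr_nil]
    linarith
  | append_singleton l i ih =>
    have e : ∀ H : Euc n → ℝ, lD (l ++ [i]) H = lD l (_root_.pD i H) := fun H => by simp [lD]
    rw [e, e]
    refine ih (contDiffAt_pD hF i) (contDiffAt_pD hG i) (k := k - 1) ?_ (by simp at hl; omega)
    refine (h.pD i).congr ?_
    filter_upwards [ev_diff hF, ev_diff hG] with y h1 h2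
    simp [_root_.pD, fderiv_fun_sub h1 h2]

/-! bounds at unit scale -/

lemma bound_of_compact {E : Type*} [NormedAddCommGroup E] [NormedSpace ℝ E]
    (F : E → ℝ) (hF : ContDiff ℝ ∞ F) (hc : HasCompactSupport F) (K : ℕ) :
    ∃ B : ℝ, 0 ≤ B ∧ ∀ k ≤ K, ∀ y, ‖iteratedFDeriv ℝ k F y‖ ≤ B := by
  have h : ∀ k : ℕ, ∃ B : ℝ, ∀ y, ‖iteratedFDeriv ℝ k F y‖ ≤ B := fun k =>
    (hc.iteratedFDeriv k).exists_bound_of_continuous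
      (hF.continuous_iteratedFDeriv (by exact_mod_cast le_top))
  choose B hB using h
  refine ⟨∑ k ∈ Finset.range (K + 1), |B k|, Finset.sum_nonneg fun _ _ => abs_nonneg _, ?_⟩
  intro k hk y
  refine (hB k y).trans ((le_abs_self _).trans ?_)
  exact Finset.single_le_sum (f := fun k => |B k|) (fun _ _ => abs_nonneg _)
    (Finset.mem_range.2 (by omega))

lemma exists_psi : ∃ ψ : ℝ → ℝ, ContDiff ℝ ∞ ψ ∧ HasCompactSupport ψ ∧
    ∀ t, |t| ≤ 4 / 5 → ψ t = Real.sqrt (1 - t ^ 2) := by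
  let b : ContDiffBump (0 : ℝ) := ⟨4 / 5, 9 / 10, by norm_num, by norm_num⟩
  refine ⟨fun t => b t * Real.sqrt (1 - t ^ 2), ?_, ?_, ?_⟩
  · rw [contDiff_iff_contDiffAt]
    intro t
    by_cases ht : |t| < 1
    · refine b.contDiffAt.mul ?_
      refine ContDiffAt.sqrt (by fun_prop) ?_
      have := (sq_lt_one_iff_abs_lt_one t).2 ht
      linarith
    · have : (fun t => b t * Real.sqrt (1 - t ^ 2)) =ᶠ[𝓝 t] fun _ => 0 := by
        have ho : IsOpen {t : ℝ | 9 / 10 < |t|} := isOpen_lt continuous_const continuous_abs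
        filter_upwards [ho.mem_nhds (show (9 / 10 : ℝ) < |t| by push Not at ht; linarith)] with z hz
        have : b z = 0 := b.zero_of_le_dist (by
          simp only [dist_zero_right, Real.norm_eq_abs]; exact le_of_lt hz)
        simp [this]
      exact contDiffAt_const.congr_of_eventuallyEq this
  · exact b.hasCompactSupport.mul_right
  · intro t ht
    have : b t = 1 := b.one_of_mem_closedBall (by simpa [b] using ht)
    simp [this]

/-- Multi-indices of order `< m`. -/
def idxSet (m n : ℕ) : Finset (Fin n →₀ ℕ) :=
  (Finset.range m).biUnion fun k => Finset.finsuppAntidiag Finset.univ k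

lemma mem_idxSet {m : ℕ} {s : Fin n →₀ ℕ} : s ∈ idxSet m n ↔ ∑ i, s i < m := by
  simp [idxSet]

/-- monomials -/
def mono (s : Fin n →₀ ℕ) (u : Euc n) : ℝ := ∏ i, u i ^ s i

lemma contDiff_mono (s : Fin n →₀ ℕ) : ContDiff ℝ ∞ (mono s) := by
  unfold mono
  exact contDiff_prod fun i _ => (contDiff_coord i).pow _

/-- the localized polynomial -/
def TT (m : ℕ) (χ : Euc n → ℝ) (a : (Fin n →₀ ℕ) → ℝ) (u : Euc n) : ℝ :=
  ∑ s ∈ idxSet m n, a s * (χ u * mono s u)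

lemma contDiff_TT (m : ℕ) (χ : Euc n → ℝ) (hχ : ContDiff ℝ ∞ χ) (a : (Fin n →₀ ℕ) → ℝ) :
    ContDiff ℝ ∞ (TT m χ a) := by
  unfold TT
  exact ContDiff.sum fun s _ => contDiff_const.mul (hχ.mul (contDiff_mono s))

lemma abs_mono_le (s : Fin n →₀ ℕ) (hs : s ≠ 0) (u : Euc n) (c : ℝ) (hc : c ≤ 1) (hu : ‖u‖ ≤ c) :
    |mono s u| ≤ c := by
  have hu' : ∀ i, |u i| ≤ c := fun i => (PiLp.norm_apply_le u i).trans hu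
  obtain ⟨j, hj⟩ : ∃ j, s j ≠ 0 := by
    by_contra! h
    exact hs (Finsupp.ext h)
  unfold mono
  rw [Finset.abs_prod, ← Finset.mul_prod_erase Finset.univ _ (Finset.mem_univ j)]
  have h1 : |u j ^ s j| ≤ c := by
    rw [abs_pow]
    exact (pow_le_of_le_one (abs_nonneg _) ((hu' j).trans hc) hj).trans (hu' j)
  have h2 : ∏ i ∈ Finset.univ.erase j, |u i ^ s i| ≤ 1 :=
    Finset.prod_le_one (fun _ _ => abs_nonneg _) fun i _ => by
      rw [abs_pow]
      exact pow_le_one₀ (abs_nonneg _) ((hu' i).trans hc)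
  have h3 : 0 ≤ ∏ i ∈ Finset.univ.erase j, |u i ^ s i| := Finset.prod_nonneg fun _ _ => abs_nonneg _
  nlinarith [abs_nonneg (u j ^ s j)]

lemma unit_scale (m : ℕ) (ψ : ℝ → ℝ) (hψ : ContDiff ℝ ∞ ψ) (hψc : HasCompactSupport ψ) :
    ∃ (c₀ C : ℝ) (χ : Euc n → ℝ), 0 < c₀ ∧ c₀ < 1 ∧ 0 < C ∧ ContDiff ℝ ∞ χ ∧
      (χ =ᶠ[𝓝 0] fun _ => 1) ∧ (∀ u, c₀ ≤ ‖u‖ → χ u = 0) ∧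
      ∀ a : (Fin n →₀ ℕ) → ℝ, (∀ s ∈ idxSet m n, |a s| ≤ 1) → |a 0| ≤ 1 / Real.sqrt 2 →
        (∀ u, |TT m χ a u| ≤ 4 / 5) ∧
        ∀ l : List (Fin n), l.length ≤ m → ∀ u,
          |lD l (TT m χ a) u| ≤ C ∧ |lD l (fun z => ψ (TT m χ a z)) u| ≤ C := by
  obtain ⟨N, hN⟩ : ∃ N : ℝ, N = ((idxSet m n).card : ℝ) := ⟨_, rfl⟩
  have hN0 : 0 ≤ N := by rw [hN]; positivity
  set c₀ : ℝ := 1 / (20 * (N + 1)) with hc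
  have hc0 : 0 < c₀ := by positivity
  have hcN : N * c₀ ≤ 1 / 20 := by
    rw [hc, mul_one_div, div_le_div_iff₀ (by positivity) (by norm_num)]; linarith
  have hc1 : c₀ < 1 := by
    rw [hc, div_lt_one (by positivity)]; linarith
  let χ : ContDiffBump (0 : Euc n) := ⟨c₀ / 2, c₀, by positivity, by linarith⟩
  have hχ0 : ∀ u : Euc n, c₀ ≤ ‖u‖ → χ u = 0 := fun u hu =>
    χ.zero_of_le_dist (by simpa [χ] using hu)
  have hsm : ∀ s : Fin n →₀ ℕ, ContDiff ℝ ∞ (fun u => χ u * mono s u) := fun s =>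
    χ.contDiff.mul (contDiff_mono s)
  have hb := fun s : Fin n →₀ ℕ => bound_of_compact _ (hsm s) (χ.hasCompactSupport.mul_right) m
  choose B hB0 hB using hb
  obtain ⟨D, hD0, hD⟩ := bound_of_compact ψ hψ hψc m
  set A : ℝ := 1 + ∑ s ∈ idxSet m n, B s with hA
  have hA1 : 1 ≤ A := by
    have : 0 ≤ ∑ s ∈ idxSet m n, B s := Finset.sum_nonneg fun s _ => hB0 s
    linarith
  refine ⟨c₀, A + m.factorial * D * A ^ m, χ, hc0, hc1, by positivity, χ.contDiff,
    χ.eventuallyEq_one, hχ0, ?_⟩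
  intro a ha ha0
  have hit : ∀ k ≤ m, ∀ u, ‖iteratedFDeriv ℝ k (TT m χ a) u‖ ≤ A := by
    intro k hk u
    have hk' : ((k : ℕ) : WithTop ℕ∞) ≤ ∞ := by exact_mod_cast le_top
    have e : TT m χ a = fun u => ∑ s ∈ idxSet m n, (a s • fun u => χ u * mono s u) u := by
      funext u; simp [TT]
    have hd : ∀ s ∈ idxSet m n, ContDiffAt ℝ k (a s • fun u => χ u * mono s u) u :=
      fun s _ => (contDiff_const.smul ((hsm s).of_le hk')).contDiffAt
    rw [e, iteratedFDeriv_fun_sum_apply hd]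
    refine (norm_sum_le _ _).trans ?_
    have : ∑ s ∈ idxSet m n, ‖iteratedFDeriv ℝ k (a s • fun u => χ u * mono s u) u‖
        ≤ ∑ s ∈ idxSet m n, B s := by
      refine Finset.sum_le_sum fun s hs => ?_
      rw [iteratedFDeriv_const_smul_apply ((hsm s).of_le hk').contDiffAt, norm_smul]
      have h1 := ha s hs
      have h2 := hB s k hk u
      rw [Real.norm_eq_abs]
      calc _ ≤ 1 * B s := mul_le_mul h1 h2 (norm_nonneg _) (by norm_num)
        _ = B s := one_mul _
    linarith
  have hT := contDiff_TT m χ χ.contDiff a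
  refine ⟨fun u => ?_, fun l hl u => ⟨?_, ?_⟩⟩
  · by_cases hu : c₀ ≤ ‖u‖
    · simp [TT, hχ0 u hu]; norm_num
    push Not at hu
    have hs2 : 1 / Real.sqrt 2 ≤ 3 / 4 := by
      rw [div_le_div_iff₀ (by positivity) (by norm_num)]
      have : (4 / 3 : ℝ) ≤ Real.sqrt 2 := Real.le_sqrt_of_sq_le (by norm_num)
      linarith
    have hterm : ∀ s ∈ idxSet m n, |a s * (χ u * mono s u)| ≤ c₀ + if s = 0 then 3 / 4 else 0 := by
      intro s hs
      have hχ1 : |χ u| ≤ 1 := by rw [abs_of_nonneg χ.nonneg]; exact χ.le_one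
      by_cases h0 : s = 0
      · subst h0
        simp only [mono, Finsupp.coe_zero, Pi.zero_apply, pow_zero, Finset.prod_const_one, mul_one,
          if_true, abs_mul]
        nlinarith [abs_nonneg (a 0), abs_nonneg (χ u)]
      · rw [if_neg h0, add_zero, abs_mul, abs_mul]
        have h1 := abs_mono_le s h0 u c₀ hc1.le hu.le
        have h2 : |χ u| * |mono s u| ≤ 1 * c₀ :=
          mul_le_mul hχ1 h1 (abs_nonneg _) (by norm_num)
        have h3 := mul_le_mul (ha s hs) h2 (by positivity) (by norm_num)
        linarith
    calc |TT m χ a u| ≤ ∑ s ∈ idxSet m n, |a s * (χ u * mono s u)| := Finset.abs_sum_le_sum_abs _ _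
      _ ≤ ∑ s ∈ idxSet m n, (c₀ + if s = 0 then 3 / 4 else 0) := Finset.sum_le_sum hterm
      _ ≤ N * c₀ + 3 / 4 := by
        rw [Finset.sum_add_distrib, Finset.sum_const, nsmul_eq_mul, Finset.sum_ite_eq', ← hN]
        have : (if (0 : Fin n →₀ ℕ) ∈ idxSet m n then (3 / 4 : ℝ) else 0) ≤ 3 / 4 := by
          split_ifs <;> norm_num
        linarith
      _ ≤ 4 / 5 := by linarith
  · have := (abs_lD_le l _ hT u).trans (hit _ hl u)
    have : 0 ≤ m.factorial * D * A ^ m := by positivity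
    linarith
  · have h1 := abs_lD_le l (fun z => ψ (TT m χ a z)) (hψ.comp hT) u
    have h2 := norm_iteratedFDeriv_comp_le (n := l.length) hψ hT
      (by exact_mod_cast le_top) u (C := D) (D := A)
      (fun i hi => hD i (hi.trans hl) _)
      (fun i hi1 hi => (hit i (hi.trans hl) u).trans (le_self_pow₀ hA1 (by omega)))
    have h3 : (l.length.factorial : ℝ) * D * A ^ l.length ≤ m.factorial * D * A ^ m := by
      have : (l.length.factorial : ℝ) ≤ m.factorial := by exact_mod_cast Nat.factorial_le hl
      gcongr
    have h4 : |lD l (fun z => ψ (TT m χ a z)) u| ≤ _ := h1.trans (h2.trans h3)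
    linarith

/-! polynomial shift -/

lemma peval_polyShift (v : Euc n) (P : MPoly n) (u : Euc n) :
    peval (polyShift (fun i => v i) P) u = peval P (u + v) := by
  unfold peval polyShift
  induction P using MvPolynomial.induction_on with
  | C a => simp
  | add p q hp hq => simp only [map_add, hp, hq]
  | mul_X p i hp => simp only [map_mul, hp]; simp

lemma polyShift_shift (v : Fin n → ℝ) (P : MPoly n) :
    polyShift v (polyShift (fun i => -(v i)) P) = P := by
  unfold polyShift
  induction P using MvPolynomial.induction_on with
  | C a => simp
  | add p q hp hq => simp only [map_add, hp, hq]
  | mul_X p i hp => simp only [map_mul, hp]; simp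

lemma coeff_truncLE (d : ℕ) (P : MPoly n) (s : Fin n →₀ ℕ) (hs : ∑ i, s i ≤ d) :
    MvPolynomial.coeff s (truncLE d P) = MvPolynomial.coeff s P := by
  classical
  unfold truncLE
  have hs' : (s.sum fun _ e => e) ≤ d := by rwa [Finsupp.sum_fintype _ _ (by simp)]
  simp only [MvPolynomial.coeff_sum, MvPolynomial.coeff_monomial]
  rw [Finset.sum_ite_eq']
  simp only [Finset.mem_filter, MvPolynomial.mem_support_iff, hs', and_true]
  split_ifs with h
  · rfl
  · push Not at h; exact h.symm

lemma jmul_coeff (m : ℕ) (x : Euc n) (Q₁ Q₂ : MPoly n)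
    (h : jmul m n x Q₁ Q₁ + jmul m n x Q₂ Q₂ = 1) (s : Fin n →₀ ℕ) (hs : ∑ i, s i ≤ m - 1) :
    MvPolynomial.coeff s (polyShift (fun i => x i) Q₁ * polyShift (fun i => x i) Q₁
      + polyShift (fun i => x i) Q₂ * polyShift (fun i => x i) Q₂ - 1) = 0 := by
  have hadd : ∀ (v : Fin n → ℝ) (p q : MPoly n),
      polyShift v (p + q) = polyShift v p + polyShift v q := fun v p q => by simp [polyShift]
  have hmul : ∀ (v : Fin n → ℝ) (p q : MPoly n),
      polyShift v (p * q) = polyShift v p * polyShift v q := fun v p q => by simp [polyShift]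
  have hone : ∀ (v : Fin n → ℝ), polyShift v (1 : MPoly n) = 1 := fun v => by simp [polyShift]
  have h' := congrArg (polyShift (fun i => x i)) h
  rw [hadd, hone, jmul, jmul, jetTrunc, jetTrunc, polyShift_shift, polyShift_shift, hmul, hmul] at h'
  have h'' := congrArg (MvPolynomial.coeff s) h'
  rw [MvPolynomial.coeff_add, coeff_truncLE _ _ _ hs, coeff_truncLE _ _ _ hs] at h''
  rw [MvPolynomial.coeff_sub, MvPolynomial.coeff_add, h'', sub_self]

lemma mono_smul (s : Fin n →₀ ℕ) (c : ℝ) (u : Euc n) :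
    mono s (c • u) = c ^ (∑ i, s i) * mono s u := by
  simp only [mono, PiLp.smul_apply, smul_eq_mul, mul_pow, Finset.prod_mul_distrib,
    Finset.prod_pow_eq_pow_sum]

/-- truncated polynomial -/
def trP (m : ℕ) (R : MPoly n) : MPoly n :=
  ∑ s ∈ idxSet m n, MvPolynomial.monomial s (MvPolynomial.coeff s R)

lemma peval_trP (m : ℕ) (R : MPoly n) (u : Euc n) :
    peval (trP m R) u = ∑ s ∈ idxSet m n, MvPolynomial.coeff s R * mono s u := by
  simp only [peval, trP, map_sum, MvPolynomial.eval_monomial, mono]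
  refine Finset.sum_congr rfl fun s _ => ?_
  rw [Finsupp.prod_fintype _ _ (by simp)]

lemma coeff_trP (m : ℕ) (R : MPoly n) (s : Fin n →₀ ℕ) (hs : ∑ i, s i < m) :
    MvPolynomial.coeff s (trP m R) = MvPolynomial.coeff s R := by
  classical
  simp only [trP, MvPolynomial.coeff_sum, MvPolynomial.coeff_monomial]
  rw [Finset.sum_ite_eq', if_pos (mem_idxSet.2 hs)]

lemma peval_sub (P Q : MPoly n) (u : Euc n) : peval (P - Q) u = peval P u - peval Q u := by
  simp [peval]

lemma peval_eq_shift (x : Euc n) (Q : MPoly n) :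
    peval Q = fun y => peval (polyShift (fun i => x i) Q) (y - x) := by
  funext y
  rw [peval_polyShift, sub_add_cancel]

lemma mD_shift (x : Euc n) (Q : MPoly n) (β : Fin n → ℕ) :
    mD β (peval Q) x = mD β (peval (polyShift (fun i => x i) Q)) 0 := by
  have h := lD_scale (idxList β) (peval (polyShift (fun i => x i) Q)) 1 x (contDiff_peval _)
  have h2 : peval Q = fun y => peval (polyShift (fun i => x i) Q) ((1 : ℝ) • (y - x)) := by
    rw [peval_eq_shift x Q]; simp
  rw [mD_eq, mD_eq, h2, h]
  simp

lemma main_aux (m n : ℕ) (hm : 0 < m) :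
    ∃ c₀ C : ℝ, 0 < c₀ ∧ c₀ < 1 ∧ 0 < C ∧
      ∀ δ : ℝ, 0 < δ → δ ≤ 1 → ∀ x : Euc n, ∀ Q₁ Q₂ : MPoly n,
        MvPolynomial.totalDegree Q₁ ≤ m - 1 → MvPolynomial.totalDegree Q₂ ≤ m - 1 →
        (∀ β : Fin n → ℕ, deg β ≤ m - 1 →
          |mD β (peval Q₁) x| ≤ δ ^ (-(deg β : ℤ)) ∧
          |mD β (peval Q₂) x| ≤ δ ^ (-(deg β : ℤ))) →
        jmul m n x Q₁ Q₁ + jmul m n x Q₂ Q₂ = 1 →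
        1 / Real.sqrt 2 ≤ peval Q₁ x →
        ∃ θ₁ θ₂ : Euc n → ℝ,
          ContDiff ℝ (m : ℕ∞) θ₁ ∧ ContDiff ℝ (m : ℕ∞) θ₂ ∧
          (∀ β : Fin n → ℕ, deg β ≤ m → ∀ y : Euc n,
            |mD β θ₁ y| ≤ C * δ ^ (-(deg β : ℤ)) ∧
            |mD β θ₂ y| ≤ C * δ ^ (-(deg β : ℤ))) ∧
          (∀ y : Euc n, θ₁ y ^ 2 + θ₂ y ^ 2 = 1) ∧
          IsJetAt m n θ₁ x Q₁ ∧ IsJetAt m n θ₂ x Q₂ ∧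
          (∀ y : Euc n, y ∉ Metric.ball x (c₀ * δ) → θ₁ y = 1 ∧ θ₂ y = 0) := by
  obtain ⟨ψ, hψ, hψc, hψs⟩ := exists_psi
  obtain ⟨c₀, C, χ, hc0, hc1, hC, hχ, hχ1, hχ0, H⟩ := unit_scale (n := n) m ψ hψ hψc
  refine ⟨c₀, C, hc0, hc1, hC, ?_⟩
  intro δ hδ _ x Q₁ Q₂ hQ₁ hQ₂ hb hj hpos
  set R₁ := polyShift (fun i => x i) Q₁ with hR₁
  set R₂ := polyShift (fun i => x i) Q₂ with hR₂
  have hsq := jmul_coeff m x Q₁ Q₂ hj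
  rw [← hR₁, ← hR₂] at hsq
  set a : (Fin n →₀ ℕ) → ℝ := fun s => MvPolynomial.coeff s R₂ * δ ^ (∑ i, s i) with ha
  -- the sum of squares near `x`
  have hflatG : Flat x m (fun y => peval Q₁ y * peval Q₁ y + peval Q₂ y * peval Q₂ y - 1) := by
    have h := flat_peval x m _ (fun s hs => hsq s (by omega))
    rw [peval_eq_shift x Q₁, peval_eq_shift x Q₂]
    simpa [peval] using h
  have hGx : peval Q₁ x * peval Q₁ x + peval Q₂ x * peval Q₂ x = 1 := by
    obtain ⟨k, rfl⟩ : ∃ k, m = k + 1 := ⟨m - 1, by omega⟩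
    linarith [hflatG.2.1]
  have hs2 : 0 < Real.sqrt 2 := by positivity
  have hs2' : (1 / Real.sqrt 2) * (1 / Real.sqrt 2) = 1 / 2 := by
    rw [div_mul_div_comm, Real.mul_self_sqrt (by norm_num)]; norm_num
  have hs2p : 0 < 1 / Real.sqrt 2 := by positivity
  have ha0 : |a 0| ≤ 1 / Real.sqrt 2 := by
    have e : a 0 = peval Q₂ x := by
      rw [peval_eq_shift x Q₂]
      have : (fun i => (x - x) i) = (0 : Fin n → ℝ) := by funext; simp
      simp only [ha, peval, this, MvPolynomial.eval_zero]
      simp [MvPolynomial.constantCoeff_eq, hR₂]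
    rw [e]
    refine abs_le_of_sq_le_sq ?_ hs2p.le
    nlinarith
  have ha1 : ∀ s ∈ idxSet m n, |a s| ≤ 1 := by
    intro s hs
    have hs' := mem_idxSet.1 hs
    have h1 := (hb (⇑s) (by unfold deg; omega)).2
    rw [mD_shift] at h1
    have h2 := (coeff_le_mD R₂ s).trans h1
    rw [ha]
    simp only [abs_mul, abs_pow, abs_of_pos hδ]
    have hp : 0 < δ ^ (∑ i, s i) := pow_pos hδ _
    calc _ ≤ δ ^ (-(deg (⇑s) : ℤ)) * δ ^ (∑ i, s i) := by gcongr
      _ = 1 := by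
        rw [zpow_neg, zpow_natCast]
        exact inv_mul_cancel₀ hp.ne'
  obtain ⟨hT45, hTb⟩ := H a ha1 ha0
  have hTs := contDiff_TT m χ hχ a
  set T := TT m χ a with hTdef
  set θ₂ : Euc n → ℝ := fun y => T (δ⁻¹ • (y - x)) with hθ₂
  set θ₁ : Euc n → ℝ := fun y => ψ (T (δ⁻¹ • (y - x))) with hθ₁
  have hlin : ContDiff ℝ ∞ (fun y : Euc n => δ⁻¹ • (y - x)) := by fun_prop
  have hsm2 : ContDiff ℝ ∞ θ₂ := hTs.comp hlin
  have hsm1 : ContDiff ℝ ∞ θ₁ := hψ.comp hsm2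
  have hθ₁e : ∀ y, θ₁ y = Real.sqrt (1 - θ₂ y ^ 2) := fun y => hψs _ (hT45 _)
  have hle : ∀ y, 0 < 1 - θ₂ y ^ 2 := fun y => by
    have h1 := hT45 (δ⁻¹ • (y - x))
    have h2 : θ₂ y ^ 2 ≤ (4 / 5) ^ 2 := sq_le_sq' (abs_le.1 h1).1 (abs_le.1 h1).2
    linarith
  have hone : ∀ y, θ₁ y ^ 2 + θ₂ y ^ 2 = 1 := fun y => by
    rw [hθ₁e, Real.sq_sqrt (hle y).le]; ring
  have hθ₁pos : ∀ y, 0 < θ₁ y := fun y => by rw [hθ₁e]; exact Real.sqrt_pos.2 (hle y)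
  have hmle : ((m : ℕ∞) : WithTop ℕ∞) ≤ ∞ := by exact_mod_cast le_top
  have hq1 := (contDiff_peval Q₁).contDiffAt (x := x)
  have hq2 := (contDiff_peval Q₂).contDiffAt (x := x)
  -- jets
  have hflat2 : Flat x m (fun y => θ₂ y - peval Q₂ y) := by
    have h := flat_peval x m (trP m R₂ - R₂) (fun s hs => by
      rw [MvPolynomial.coeff_sub, coeff_trP m R₂ s hs, sub_self])
    refine h.congr ?_
    have ht : Tendsto (fun y : Euc n => δ⁻¹ • (y - x)) (𝓝 x) (𝓝 0) := by
      have := hlin.continuous.tendsto x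
      simpa using this
    filter_upwards [ht.eventually hχ1] with y hy
    rw [peval_sub, peval_trP, peval_eq_shift x Q₂]
    simp only [hθ₂, hTdef, TT, hy, one_mul, mono_smul, ha]
    congr 1
    refine Finset.sum_congr rfl fun s _ => ?_
    have hp : δ ^ (∑ i, s i) ≠ 0 := (pow_pos hδ _).ne'
    rw [inv_pow]
    field_simp
  have hflat1 : Flat x m (fun y => θ₁ y - peval Q₁ y) := by
    have hQx : 0 < peval Q₁ x := lt_of_lt_of_le hs2p hpos
    have hden : ContDiffAt ℝ ∞ (fun y => -(θ₁ y + peval Q₁ y)⁻¹) x :=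
      ((hsm1.contDiffAt.add hq1).inv (by have := hθ₁pos x; positivity)).neg
    have hsum : Flat x 0 (fun y => θ₂ y + peval Q₂ y) := hsm2.contDiffAt.add hq2
    have h1 := hflat2.mul hsum
    rw [add_zero] at h1
    have h2 := (hflatG.add h1).mul (show Flat x 0 _ from hden)
    rw [add_zero] at h2
    refine h2.congr ?_
    have hev : ∀ᶠ y in 𝓝 x, 0 < peval Q₁ y :=
      (contDiff_peval Q₁).continuous.continuousAt.eventually (lt_mem_nhds hQx)
    filter_upwards [hev] with y hy
    have hd : θ₁ y + peval Q₁ y ≠ 0 := by have := hθ₁pos y; positivity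
    rw [mul_neg, ← div_eq_mul_inv, ← neg_div, eq_div_iff hd]
    linear_combination hone y
  have hsc : ∀ F : Euc n → ℝ, ContDiff ℝ ∞ F →
      (∀ l : List (Fin n), l.length ≤ m → ∀ u, |lD l F u| ≤ C) →
      ∀ β : Fin n → ℕ, deg β ≤ m → ∀ y : Euc n,
        |mD β (fun y => F (δ⁻¹ • (y - x))) y| ≤ C * δ ^ (-(deg β : ℤ)) := by
    intro F hF hFb β hβ y
    rw [mD_eq, lD_scale _ F _ x hF, idxList_length, zpow_neg, zpow_natCast, abs_mul, abs_pow,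
      abs_inv, abs_of_pos hδ, inv_pow, mul_comm]
    gcongr
    exact hFb _ (by rw [idxList_length]; exact hβ) _
  refine ⟨θ₁, θ₂, hsm1.of_le hmle, hsm2.of_le hmle, ?_, hone, ⟨hQ₁, ?_⟩, ⟨hQ₂, ?_⟩, ?_⟩
  · intro β hβ y
    exact ⟨hsc (fun z => ψ (T z)) (hψ.comp hTs) (fun l hl u => (hTb l hl u).2) β hβ y,
      hsc T hTs (fun l hl u => (hTb l hl u).1) β hβ y⟩
  · intro α hα
    rw [mD_eq, mD_eq]
    exact (lD_eq_of_flat _ hsm1.contDiffAt hq1 hflat1 (by rw [idxList_length]; omega)).symm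
  · intro α hα
    rw [mD_eq, mD_eq]
    exact (lD_eq_of_flat _ hsm2.contDiffAt hq2 hflat2 (by rw [idxList_length]; omega)).symm
  · intro y hy
    have hy' : c₀ ≤ ‖δ⁻¹ • (y - x)‖ := by
      rw [Metric.mem_ball, not_lt, dist_eq_norm] at hy
      rw [norm_smul, norm_inv, Real.norm_eq_abs, abs_of_pos hδ, inv_mul_eq_div,
        le_div_iff₀ hδ]
      exact hy
    have h2 : θ₂ y = 0 := by
      simp [hθ₂, hTdef, TT, hχ0 _ hy']
    refine ⟨?_, h2⟩
    rw [hθ₁e, h2]; simp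

end ThetaAux

/-- Construction of the partition-of-unity pair `θ₁, θ₂` ((2.19)–(2.22) in the proof of
Lemma 2.1). -/
theorem theta_partition_exists (m n : ℕ) (hm : 0 < m) (hn : 0 < n) :
    ∃ c₀ C : ℝ, 0 < c₀ ∧ c₀ < 1 ∧ 0 < C ∧
      ∀ δ : ℝ, 0 < δ → δ ≤ 1 → ∀ x : Euc n, ∀ Q₁ Q₂ : MPoly n,
        MvPolynomial.totalDegree Q₁ ≤ m - 1 → MvPolynomial.totalDegree Q₂ ≤ m - 1 →
        (∀ β : Fin n → ℕ, deg β ≤ m - 1 →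
          |mD β (peval Q₁) x| ≤ δ ^ (-(deg β : ℤ)) ∧
          |mD β (peval Q₂) x| ≤ δ ^ (-(deg β : ℤ))) →
        jmul m n x Q₁ Q₁ + jmul m n x Q₂ Q₂ = 1 →
        1 / Real.sqrt 2 ≤ peval Q₁ x →
        ∃ θ₁ θ₂ : Euc n → ℝ,
          ContDiff ℝ (m : ℕ∞) θ₁ ∧ ContDiff ℝ (m : ℕ∞) θ₂ ∧
          (∀ β : Fin n → ℕ, deg β ≤ m → ∀ y : Euc n,
            |mD β θ₁ y| ≤ C * δ ^ (-(deg β : ℤ)) ∧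
            |mD β θ₂ y| ≤ C * δ ^ (-(deg β : ℤ))) ∧
          (∀ y : Euc n, θ₁ y ^ 2 + θ₂ y ^ 2 = 1) ∧
          IsJetAt m n θ₁ x Q₁ ∧ IsJetAt m n θ₂ x Q₂ ∧
          (∀ y : Euc n, y ∉ Metric.ball x (c₀ * δ) → θ₁ y = 1 ∧ θ₂ y = 0) := by
  exact ThetaAux.main_aux m n hm

end
end
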